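/- arXiv:2308.00185 — 2 statements merged into one kernel-verified Lean document; each statement's English description precedes it below -/
import Mathlib

section
/- Suppose 0 < t₀ < t₁ < 1 and f, g : [0,5] → ℝ are continuous and strictly positive, and suppose inf_{x ∈ [0,5]} (L_{t₀} f)(x)/f(x) > 1 and sup_{x ∈ [0,5]} (L_{t₁} g)(x)/g(x) < 1. Then t₀ < dim_H(J_T) < t₁, where J_T is the smallest nonempty closed subset of [0,5] with J_T = S₋₁(J_T) ∪ S₊₁(J_T). -/
open Set MeasureTheory

/-- The two inverse branches of the decimation polynomial `R(x) = x(5-x)`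
associated to the Sierpiński triangle. -/
noncomputable def S (ε : ℝ) (x : ℝ) : ℝ := (5 + ε * Real.sqrt (25 - 4 * x)) / 2

/-- The transfer operator `(L_t f)(x) = (25-4x)^{-t/2} (f(S₋₁x) + f(S₊₁x))`. -/
noncomputable def L (t : ℝ) (f : ℝ → ℝ) (x : ℝ) : ℝ :=
  (25 - 4 * x) ^ (-t / 2) * (f (S (-1) x) + f (S 1 x))

/-! ### A finite-cover criterion for positive Hausdorff measure -/

/-- A set of reals is contained in an open interval whose length, raised to the power `t`, is
controlled by the diameter of the set. -/
lemma exists_Ioo_superset_rpow_le {t : ℝ} (ht : 0 < t) (ht1 : t ≤ 1) {T : Set ℝ}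
    (hT : Metric.ediam T ≤ 1) {e : NNReal} (he : 0 < e) :
    ∃ a b : ℝ, a < b ∧ T ⊆ Ioo a b ∧
      ENNReal.ofReal ((b - a) ^ t) ≤ 2 * (⨆ _ : T.Nonempty, Metric.ediam T ^ t) + e := by
  have hr : 0 < (e : ℝ) ^ (1 / t) := Real.rpow_pos_of_pos (by exact_mod_cast he) _
  have hrt : ((e : ℝ) ^ (1 / t)) ^ t = e := by
    rw [← Real.rpow_mul (NNReal.coe_nonneg e), one_div_mul_cancel ht.ne', Real.rpow_one]
  set r := (e : ℝ) ^ (1 / t)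
  rcases T.eq_empty_or_nonempty with rfl | ⟨p, hp⟩
  · refine ⟨0, r, hr, empty_subset _, ?_⟩
    simp [hrt]
  · have hfin : Metric.ediam T ≠ ⊤ := ne_top_of_le_ne_top ENNReal.one_ne_top hT
    have hD : (0 : ℝ) ≤ Metric.diam T := Metric.diam_nonneg
    refine ⟨p - Metric.diam T - r / 2, p + Metric.diam T + r / 2, by linarith, ?_, ?_⟩
    · intro q hq
      have := Metric.dist_le_diam_of_mem' hfin hq hp
      rw [Real.dist_eq, abs_le] at this
      constructor <;> linarith [this.1, this.2]
    · have hlen : p + Metric.diam T + r / 2 - (p - Metric.diam T - r / 2)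
          = 2 * Metric.diam T + r := by ring
      rw [hlen, ciSup_pos ⟨p, hp⟩]
      have h1 : (2 * Metric.diam T + r) ^ t ≤ 2 * Metric.diam T ^ t + e := by
        calc (2 * Metric.diam T + r) ^ t ≤ (2 * Metric.diam T) ^ t + r ^ t :=
              Real.rpow_add_le_add_rpow (by positivity) hr.le ht.le ht1
          _ = 2 ^ t * Metric.diam T ^ t + e := by rw [Real.mul_rpow (by norm_num) hD, hrt]
          _ ≤ 2 * Metric.diam T ^ t + e := by
              have : (2 : ℝ) ^ t ≤ 2 ^ (1 : ℝ) :=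
                Real.rpow_le_rpow_of_exponent_le (by norm_num) ht1
              rw [Real.rpow_one] at this
              gcongr
      calc ENNReal.ofReal ((2 * Metric.diam T + r) ^ t)
          ≤ ENNReal.ofReal (2 * Metric.diam T ^ t + e) := ENNReal.ofReal_le_ofReal h1
        _ = 2 * Metric.ediam T ^ t + e := by
            rw [ENNReal.ofReal_add (by positivity) (NNReal.coe_nonneg e),
              ENNReal.ofReal_mul (by norm_num),
              ← ENNReal.ofReal_rpow_of_nonneg hD ht.le, Metric.diam, ENNReal.ofReal_toReal hfin]
            simp

/-- If finite covers of a compact set by intervals have `t`-sums bounded below, then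
the `t`-dimensional Hausdorff measure of the set is nonzero. -/
lemma hausdorffMeasure_ne_zero_of_finite_cover {J : Set ℝ} (hJ : IsCompact J) {t c : ℝ}
    (ht : 0 < t) (ht1 : t ≤ 1) (hc : 0 < c)
    (h : ∀ (s : Finset ℕ) (a b : ℕ → ℝ), (∀ n, a n < b n) →
      J ⊆ ⋃ n ∈ s, Icc (a n) (b n) → c ≤ ∑ n ∈ s, (b n - a n) ^ t) :
    μH[t] J ≠ 0 := by
  intro h0
  have hη : 0 < ENNReal.ofReal (c / 4) := ENNReal.ofReal_pos.2 (by positivity)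
  rw [Measure.hausdorffMeasure_apply, ← bot_eq_zero, iSup₂_eq_bot] at h0
  have h1 := h0 1 one_pos
  rw [bot_eq_zero] at h1
  have h2 := h1.trans_lt hη
  simp only [iInf_lt_iff] at h2
  obtain ⟨T, hcov, hdiam, hsum⟩ := h2
  obtain ⟨e, he, hesum⟩ := ENNReal.exists_pos_sum_of_countable hη.ne' ℕ
  choose a b hab hsub hle using fun n => exists_Ioo_superset_rpow_le ht ht1 (hdiam n) (he n)
  obtain ⟨s, hs⟩ := hJ.elim_finite_subcover (fun n => Ioo (a n) (b n)) (fun n => isOpen_Ioo)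
    (hcov.trans (iUnion_mono hsub))
  have hlow := h s a b hab (hs.trans (iUnion₂_mono fun n _ => Ioo_subset_Icc_self))
  have hup : ENNReal.ofReal c < ENNReal.ofReal c := by
    calc ENNReal.ofReal c ≤ ENNReal.ofReal (∑ n ∈ s, (b n - a n) ^ t) :=
          ENNReal.ofReal_le_ofReal hlow
      _ = ∑ n ∈ s, ENNReal.ofReal ((b n - a n) ^ t) :=
          ENNReal.ofReal_sum_of_nonneg fun n _ => Real.rpow_nonneg (sub_pos.2 (hab n)).le _
      _ ≤ ∑ n ∈ s, (2 * (⨆ _ : (T n).Nonempty, Metric.ediam (T n) ^ t) + e n) :=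
          Finset.sum_le_sum fun n _ => hle n
      _ ≤ ∑' n, (2 * (⨆ _ : (T n).Nonempty, Metric.ediam (T n) ^ t) + e n) :=
          ENNReal.sum_le_tsum s
      _ = 2 * (∑' n, ⨆ _ : (T n).Nonempty, Metric.ediam (T n) ^ t) + ∑' n, (e n : ENNReal) := by
          rw [ENNReal.tsum_add, ENNReal.tsum_mul_left]
      _ < 2 * ENNReal.ofReal (c / 4) + ENNReal.ofReal (c / 4) :=
          ENNReal.add_lt_add_of_le_of_lt
            (ENNReal.mul_ne_top (by simp) (hsum.trans ENNReal.ofReal_lt_top).ne)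
            (by gcongr) hesum
      _ ≤ ENNReal.ofReal c := by
          have : (2 : ENNReal) = ENNReal.ofReal 2 := by simp
          rw [this, ← ENNReal.ofReal_mul (by norm_num),
            ← ENNReal.ofReal_add (by positivity) (by positivity)]
          exact ENNReal.ofReal_le_ofReal (by linarith)
  exact hup.false

/-! ### The inverse branches -/

lemma sqrt_five_le_sqrt {x : ℝ} (hx : x ≤ 5) : √5 ≤ √(25 - 4 * x) :=
  Real.sqrt_le_sqrt (by linarith)

lemma two_lt_sqrt_five : (2.2 : ℝ) < √5 := Real.lt_sqrt_of_sq_lt (by norm_num)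

lemma sqrt_le_five {x : ℝ} (hx : 0 ≤ x) : √(25 - 4 * x) ≤ 5 :=
  Real.sqrt_le_iff.2 ⟨by norm_num, by linarith⟩

lemma S_mem_Icc {ε x : ℝ} (hε : ε = -1 ∨ ε = 1) (hx : x ∈ Icc (0 : ℝ) 5) :
    S ε x ∈ Icc (0 : ℝ) 5 := by
  have h0 := Real.sqrt_nonneg (25 - 4 * x)
  have h5 := sqrt_le_five hx.1
  rcases hε with rfl | rfl <;> unfold S <;> constructor <;> linarith

lemma S_neg_one_le {x : ℝ} (hx : x ≤ 5) : S (-1) x ≤ 1.4 := by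
  have := sqrt_five_le_sqrt hx
  have := two_lt_sqrt_five
  unfold S; linarith

lemma le_S_one {x : ℝ} (hx : x ≤ 5) : 3.6 ≤ S 1 x := by
  have := sqrt_five_le_sqrt hx
  have := two_lt_sqrt_five
  unfold S; linarith

/-- `S ε` is a right inverse of `x ↦ x (5 - x)`. -/
lemma S_mul_five_sub {ε x : ℝ} (hε : ε = -1 ∨ ε = 1) (hx : x ≤ 5) :
    S ε x * (5 - S ε x) = x := by
  have := Real.sq_sqrt (show 0 ≤ 25 - 4 * x by linarith)
  rcases hε with rfl | rfl <;> unfold S <;> linarith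

lemma sq_five_sub_two_mul_S {ε x : ℝ} (hε : ε = -1 ∨ ε = 1) (hx : x ≤ 5) :
    (5 - 2 * S ε x) ^ 2 = 25 - 4 * x := by
  have := S_mul_five_sub hε hx
  linarith

/-- A point with a branch derivative at most `r` has transfer weight at most `r ^ t`. -/
lemma weight_le {t r x z : ℝ} (ht : 0 ≤ t) (hz : 0 < z) (hzx : z ^ 2 = 25 - 4 * x)
    (hr : 1 / z ≤ r) : (25 - 4 * x) ^ (-t / 2) ≤ r ^ t := by
  have : (25 - 4 * x) ^ (-t / 2) = (1 / z) ^ t := by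
    rw [← hzx, ← Real.rpow_natCast z 2, ← Real.rpow_mul hz.le, one_div, Real.inv_rpow hz.le,
      ← Real.rpow_neg hz.le]
    congr 1
    push_cast
    ring
  rw [this]
  exact Real.rpow_le_rpow (by positivity) hr ht

/-! ### The transfer operator -/

lemma L_sum {ι : Type*} (t : ℝ) (s : Finset ι) (h : ι → ℝ → ℝ) :
    L t (fun x => ∑ i ∈ s, h i x) = fun x => ∑ i ∈ s, L t (h i) x := by
  funext x
  simp only [L, ← Finset.sum_add_distrib, Finset.mul_sum]

lemma L_const_mul (t c : ℝ) (h : ℝ → ℝ) :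
    L t (fun x => c * h x) = fun x => c * L t h x := by
  funext x
  simp only [L]
  ring

lemma iterate_L_sum {ι : Type*} (t : ℝ) (s : Finset ι) (h : ι → ℝ → ℝ) (N : ℕ) :
    (L t)^[N] (fun x => ∑ i ∈ s, h i x) = fun x => ∑ i ∈ s, (L t)^[N] (h i) x := by
  induction N generalizing h with
  | zero => rfl
  | succ N ih => simp only [Function.iterate_succ_apply, L_sum, ih]

lemma iterate_L_const_mul (t c : ℝ) (h : ℝ → ℝ) (N : ℕ) :
    (L t)^[N] (fun x => c * h x) = fun x => c * (L t)^[N] h x := by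
  induction N generalizing h with
  | zero => rfl
  | succ N ih => simp only [Function.iterate_succ_apply, L_const_mul, ih]

lemma L_mono {t : ℝ} {J : Set ℝ} (hJ5 : ∀ x ∈ J, x ≤ 5)
    (hJS : ∀ x ∈ J, S (-1) x ∈ J ∧ S 1 x ∈ J) {h k : ℝ → ℝ} (hhk : ∀ x ∈ J, h x ≤ k x) :
    ∀ x ∈ J, L t h x ≤ L t k x := by
  intro x hx
  have := hJ5 x hx
  exact mul_le_mul_of_nonneg_left (add_le_add (hhk _ (hJS x hx).1) (hhk _ (hJS x hx).2))
    (Real.rpow_nonneg (by linarith) _)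

lemma iterate_L_mono {t : ℝ} {J : Set ℝ} (hJ5 : ∀ x ∈ J, x ≤ 5)
    (hJS : ∀ x ∈ J, S (-1) x ∈ J ∧ S 1 x ∈ J) (N : ℕ) {h k : ℝ → ℝ}
    (hhk : ∀ x ∈ J, h x ≤ k x) : ∀ x ∈ J, (L t)^[N] h x ≤ (L t)^[N] k x := by
  induction N generalizing h k with
  | zero => exact hhk
  | succ N ih => exact ih (L_mono hJ5 hJS hhk)

lemma le_iterate_L {t : ℝ} {J : Set ℝ} (hJ5 : ∀ x ∈ J, x ≤ 5)
    (hJS : ∀ x ∈ J, S (-1) x ∈ J ∧ S 1 x ∈ J) {f : ℝ → ℝ} (hf : ∀ x ∈ J, f x ≤ L t f x)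
    (N : ℕ) : ∀ x ∈ J, f x ≤ (L t)^[N] f x := by
  induction N with
  | zero => exact fun x _ => le_rfl
  | succ N ih => exact fun x hx => (ih x hx).trans (iterate_L_mono hJ5 hJS N hf x hx)

/-! ### The lower bound -/

lemma div_exp_bound {q z d : ℝ} (hz : 1 ≤ z) (hq : 0 < q) (hd : 0 ≤ d) (hqz : q ≤ z + d) :
    1 / z ≤ Real.exp d / q := by
  have h1 := Real.add_one_le_exp d
  rw [div_le_div_iff₀ (by linarith) hq]
  nlinarith

/-- Pulling back the indicator of a short interval through the transfer operator. -/
lemma exists_L_indicator_le {t : ℝ} (ht : 0 ≤ t) {J : Set ℝ} (hJ5 : ∀ x ∈ J, x ≤ 5)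
    (hJS : ∀ x ∈ J, ∃ y ∈ J, x = S (-1) y ∨ x = S 1 y) {a b : ℝ}
    (hab : a < b) (hlt : b - a < 1 / 2) (hne : (Icc a b ∩ J).Nonempty) :
    ∃ c d q : ℝ, 3 / 2 ≤ q ∧ d - c = q * (b - a) ∧ ∀ y ∈ J,
      L t ((Icc a b).indicator 1) y ≤
        (Real.exp (b - a) / q) ^ t * (Icc c d).indicator 1 y := by
  obtain ⟨z, ⟨haz, hzb⟩, hzJ⟩ := hne
  obtain ⟨y₀, hy₀, h | h⟩ := hJS z hzJ
  · have hz := S_neg_one_le (hJ5 y₀ hy₀)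
    rw [← h] at hz
    refine ⟨a * (5 - a), b * (5 - b), 5 - a - b, by linarith, by ring, fun y hy => ?_⟩
    have hy5 := hJ5 y hy
    have h2 : S 1 y ∉ Icc a b := fun hm => by linarith [le_S_one hy5, hm.2]
    have hq : 0 < 5 - a - b := by linarith
    by_cases h1 : S (-1) y ∈ Icc a b
    · have hV : y ∈ Icc (a * (5 - a)) (b * (5 - b)) := by
        rw [← S_mul_five_sub (Or.inl rfl) hy5]
        constructor <;> nlinarith [h1.1, h1.2]
      simp only [L, indicator_of_mem h1, indicator_of_notMem h2, indicator_of_mem hV,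
        Pi.one_apply, add_zero, mul_one]
      exact weight_le ht (by linarith [h1.2]) (sq_five_sub_two_mul_S (Or.inl rfl) hy5)
        (div_exp_bound (by linarith [h1.2]) hq (by linarith) (by linarith [h1.2, h1.1]))
    · simp only [L, indicator_of_notMem h1, indicator_of_notMem h2, add_zero, mul_zero]
      have : 0 ≤ (Icc (a * (5 - a)) (b * (5 - b))).indicator (1 : ℝ → ℝ) y :=
        indicator_nonneg (fun _ _ => zero_le_one) y
      positivity
  · have hz := le_S_one (hJ5 y₀ hy₀)
    rw [← h] at hz
    refine ⟨b * (5 - b), a * (5 - a), a + b - 5, by linarith, by ring, fun y hy => ?_⟩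
    have hy5 := hJ5 y hy
    have h1 : S (-1) y ∉ Icc a b := fun hm => by linarith [S_neg_one_le hy5, hm.1]
    have hq : 0 < a + b - 5 := by linarith
    by_cases h2 : S 1 y ∈ Icc a b
    · have hV : y ∈ Icc (b * (5 - b)) (a * (5 - a)) := by
        rw [← S_mul_five_sub (Or.inr rfl) hy5]
        constructor <;> nlinarith [h2.1, h2.2]
      simp only [L, indicator_of_mem h2, indicator_of_notMem h1, indicator_of_mem hV,
        Pi.one_apply, zero_add, mul_one]
      have hsq : (2 * S 1 y - 5) ^ 2 = 25 - 4 * y := by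
        rw [← sq_five_sub_two_mul_S (Or.inr rfl) hy5]; ring
      exact weight_le ht (by linarith [h2.1]) hsq
        (div_exp_bound (by linarith [h2.1]) hq (by linarith) (by linarith [h2.2, h2.1]))
    · simp only [L, indicator_of_notMem h1, indicator_of_notMem h2, add_zero, mul_zero]
      have : 0 ≤ (Icc (b * (5 - b)) (a * (5 - a))).indicator (1 : ℝ → ℝ) y :=
        indicator_nonneg (fun _ _ => zero_le_one) y
      positivity

/-- The iterates of the transfer operator give an interval mass at most a constant times the
`t`-th power of its length, once enough iterates are taken. The factor
`exp (-2 * min (b - a) 1)` absorbs the distortion accumulated along the induction. -/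
lemma iterate_L_indicator_le {t : ℝ} (ht : 0 ≤ t) (ht1 : t ≤ 1) {J : Set ℝ}
    (hJ5 : ∀ x ∈ J, x ≤ 5) (hJS : ∀ x ∈ J, S (-1) x ∈ J ∧ S 1 x ∈ J)
    (hJS' : ∀ x ∈ J, ∃ y ∈ J, x = S (-1) y ∨ x = S 1 y)
    {f : ℝ → ℝ} {m : ℝ} (hm : 0 < m) (hmf : ∀ x ∈ J, m ≤ f x)
    (hf : ∀ x ∈ J, f x ≤ L t f x) (k : ℕ) :
    ∀ a b : ℝ, a < b → 1 / 2 ≤ (3 / 2) ^ k * (b - a) → ∀ N, k ≤ N → ∀ x ∈ J,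
      (L t)^[N] ((Icc a b).indicator 1) x ≤
        2 * Real.exp 2 / m * Real.exp (-2 * min (b - a) 1) * (b - a) ^ t * (L t)^[N] f x := by
  have hpos : ∀ N, ∀ x ∈ J, 0 < (L t)^[N] f x := fun N x hx =>
    (hm.trans_le (hmf x hx)).trans_le (le_iterate_L hJ5 hJS hf N x hx)
  have hlong : ∀ a b : ℝ, 1 / 2 ≤ b - a → ∀ N, ∀ x ∈ J,
      (L t)^[N] ((Icc a b).indicator 1) x ≤
        2 * Real.exp 2 / m * Real.exp (-2 * min (b - a) 1) * (b - a) ^ t * (L t)^[N] f x := by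
    intro a b hab N x hx
    have h1 : (L t)^[N] ((Icc a b).indicator 1) x ≤ (L t)^[N] (fun x => 1 / m * f x) x := by
      refine iterate_L_mono hJ5 hJS N (fun y hy => ?_) x hx
      calc (Icc a b).indicator (1 : ℝ → ℝ) y ≤ 1 :=
            indicator_le_self' (fun _ _ => zero_le_one) y
        _ ≤ 1 / m * f y := by
            rw [one_div, ← div_eq_inv_mul, one_le_div hm]; exact hmf y hy
    rw [iterate_L_const_mul] at h1
    refine h1.trans (mul_le_mul_of_nonneg_right ?_ (hpos N x hx).le)
    have h2 : (1 / 2 : ℝ) ≤ (b - a) ^ t := by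
      calc (1 / 2 : ℝ) = (1 / 2) ^ (1 : ℝ) := (Real.rpow_one _).symm
        _ ≤ (1 / 2) ^ t :=
            Real.rpow_le_rpow_of_exponent_ge (by norm_num) (by norm_num) ht1
        _ ≤ (b - a) ^ t := Real.rpow_le_rpow (by norm_num) hab ht
    have h3 : Real.exp (-2) ≤ Real.exp (-2 * min (b - a) 1) :=
      Real.exp_le_exp.2 (by linarith [min_le_right (b - a) 1])
    calc 1 / m = 2 * Real.exp 2 / m * Real.exp (-2) * (1 / 2) := by
          rw [Real.exp_neg]; field_simp
      _ ≤ _ := by gcongr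
  induction k with
  | zero =>
    intro a b _ hk N _ x hx
    exact hlong a b (by simpa using hk) N x hx
  | succ k ih =>
    intro a b hab hk N hN x hx
    rcases le_or_gt (1 / 2) (b - a) with hge | hlt
    · exact hlong a b hge N x hx
    have hba : 0 < b - a := sub_pos.2 hab
    rcases (Icc a b ∩ J).eq_empty_or_nonempty with hemp | hne
    · have h1 : (L t)^[N] ((Icc a b).indicator 1) x ≤ (L t)^[N] (fun x => 0 * f x) x := by
        refine iterate_L_mono hJ5 hJS N (fun y hy => ?_) x hx
        rw [indicator_of_notMem, zero_mul]
        exact fun hy' => (hemp ▸ (⟨hy', hy⟩ : y ∈ Icc a b ∩ J) : y ∈ (∅ : Set ℝ))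
      have h0 := congrFun (iterate_L_const_mul t 0 f N) x
      simp only [zero_mul] at h0 h1
      rw [h0] at h1
      have := hpos N x hx
      exact h1.trans (by positivity)
    · obtain ⟨c, d, q, hq, hdc, hL⟩ := exists_L_indicator_le ht hJ5 hJS' hab hlt hne
      obtain ⟨N, rfl⟩ : ∃ M, N = M + 1 := ⟨N - 1, by omega⟩
      have hq0 : 0 < q := by linarith
      have hcd : c < d := by have := mul_pos hq0 hba; linarith
      have hk' : 1 / 2 ≤ (3 / 2) ^ k * (d - c) := by
        rw [hdc]
        calc (1 / 2 : ℝ) ≤ (3 / 2) ^ (k + 1) * (b - a) := hk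
          _ = (3 / 2) ^ k * (3 / 2 * (b - a)) := by ring
          _ ≤ _ := by gcongr
      have h1 := iterate_L_mono (t := t) hJ5 hJS N hL x hx
      rw [iterate_L_const_mul] at h1
      have h2 := ih c d hcd hk' N (by omega) x hx
      have h3 : (L t)^[N] f x ≤ (L t)^[N + 1] f x := iterate_L_mono hJ5 hJS N hf x hx
      have hpow : (Real.exp (b - a) / q) ^ t * (d - c) ^ t
          = Real.exp (t * (b - a)) * (b - a) ^ t := by
        rw [← Real.mul_rpow (by positivity) (by linarith), hdc,
          show Real.exp (b - a) / q * (q * (b - a)) = Real.exp (b - a) * (b - a) by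
            field_simp,
          Real.mul_rpow (Real.exp_pos _).le hba.le, ← Real.exp_mul, mul_comm t]
      have hexp : Real.exp (-2 * min (d - c) 1) * Real.exp (t * (b - a))
          ≤ Real.exp (-2 * min (b - a) 1) := by
        rw [← Real.exp_add, Real.exp_le_exp, min_eq_left (by linarith : b - a ≤ 1)]
        have htb : t * (b - a) ≤ b - a := by nlinarith
        have hdc' : 3 / 2 * (b - a) ≤ d - c := by rw [hdc]; gcongr
        rcases min_cases (d - c) 1 with ⟨h, _⟩ | ⟨h, _⟩ <;> rw [h] <;> linarith
      have hpN := hpos (N + 1) x hx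
      calc (L t)^[N + 1] ((Icc a b).indicator 1) x
          ≤ (Real.exp (b - a) / q) ^ t * (L t)^[N] ((Icc c d).indicator 1) x := h1
        _ ≤ (Real.exp (b - a) / q) ^ t * (2 * Real.exp 2 / m *
              Real.exp (-2 * min (d - c) 1) * (d - c) ^ t * (L t)^[N + 1] f x) := by
            refine mul_le_mul_of_nonneg_left (h2.trans ?_) (by positivity)
            have : 0 < d - c := sub_pos.2 hcd
            gcongr
        _ = 2 * Real.exp 2 / m * (Real.exp (-2 * min (d - c) 1) *
              ((Real.exp (b - a) / q) ^ t * (d - c) ^ t)) * (L t)^[N + 1] f x := by ring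
        _ = 2 * Real.exp 2 / m * (Real.exp (-2 * min (d - c) 1) *
              Real.exp (t * (b - a))) * (b - a) ^ t * (L t)^[N + 1] f x := by
            rw [hpow]; ring
        _ ≤ _ := by gcongr

/-- If `L_t f ≥ f` for some positive bounded `f`, then the dimension is at least `t`. -/
lemma le_dimH_of_le_L {t : ℝ} (ht : 0 < t) (ht1 : t ≤ 1) {J : Set ℝ} (hJc : IsCompact J)
    (hJne : J.Nonempty) (hJ5 : ∀ x ∈ J, x ≤ 5) (hJS : ∀ x ∈ J, S (-1) x ∈ J ∧ S 1 x ∈ J)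
    (hJS' : ∀ x ∈ J, ∃ y ∈ J, x = S (-1) y ∨ x = S 1 y)
    {f : ℝ → ℝ} {m M : ℝ} (hm : 0 < m) (hmf : ∀ x ∈ J, m ≤ f x) (hfM : ∀ x ∈ J, f x ≤ M)
    (hf : ∀ x ∈ J, f x ≤ L t f x) : ENNReal.ofReal t ≤ dimH J := by
  obtain ⟨x₀, hx₀⟩ := hJne
  have hM : 0 < M := hm.trans_le ((hmf x₀ hx₀).trans (hfM x₀ hx₀))
  set K := 2 * Real.exp 2 / m
  have hK0 : 0 < K := by positivity
  refine le_dimH_of_hausdorffMeasure_ne_zero ?_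
  rw [Real.coe_toNNReal t ht.le]
  refine hausdorffMeasure_ne_zero_of_finite_cover hJc ht ht1 (c := 1 / (M * K))
    (by positivity) fun s a b hab hcov => ?_
  have hev : ∀ n, ∀ᶠ k : ℕ in Filter.atTop, 1 / 2 ≤ (3 / 2 : ℝ) ^ k * (b n - a n) := fun n =>
    ((tendsto_pow_atTop_atTop_of_one_lt (by norm_num : (1 : ℝ) < 3 / 2)).atTop_mul_const
      (sub_pos.2 (hab n))).eventually_ge_atTop _
  obtain ⟨k, hk⟩ := ((s.eventually_all).2 fun n _ => hev n).exists
  have hpos : 0 < (L t)^[k] f x₀ :=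
    (hm.trans_le (hmf x₀ hx₀)).trans_le (le_iterate_L hJ5 hJS hf k x₀ hx₀)
  have h1 : (L t)^[k] f x₀ ≤
      (L t)^[k] (fun x => M * ∑ n ∈ s, (Icc (a n) (b n)).indicator 1 x) x₀ := by
    refine iterate_L_mono hJ5 hJS k (fun y hy => ?_) x₀ hx₀
    obtain ⟨n, hn, hyn⟩ := mem_iUnion₂.1 (hcov hy)
    have : (1 : ℝ) ≤ ∑ n ∈ s, (Icc (a n) (b n)).indicator 1 y := by
      refine le_trans ?_ (Finset.single_le_sum
        (f := fun n => (Icc (a n) (b n)).indicator (1 : ℝ → ℝ) y)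
        (fun i _ => indicator_nonneg (fun _ _ => zero_le_one) y) hn)
      simp [indicator_of_mem hyn]
    nlinarith [hfM y hy]
  rw [iterate_L_const_mul, iterate_L_sum] at h1
  have h2 : ∀ n ∈ s, (L t)^[k] ((Icc (a n) (b n)).indicator 1) x₀ ≤
      K * (b n - a n) ^ t * (L t)^[k] f x₀ := by
    intro n hn
    have hd : 0 < b n - a n := sub_pos.2 (hab n)
    refine (iterate_L_indicator_le ht.le ht1 hJ5 hJS hJS' hm hmf hf k (a n) (b n) (hab n)
      (hk n hn) k le_rfl x₀ hx₀).trans ?_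
    have : Real.exp (-2 * min (b n - a n) 1) ≤ 1 :=
      Real.exp_le_one_iff.2 (by have := lt_min hd one_pos; linarith)
    calc _ ≤ K * 1 * (b n - a n) ^ t * (L t)^[k] f x₀ := by gcongr
      _ = _ := by ring
  have h3 : (L t)^[k] f x₀ ≤ M * K * (∑ n ∈ s, (b n - a n) ^ t) * (L t)^[k] f x₀ := by
    refine h1.trans ?_
    calc M * ∑ n ∈ s, (L t)^[k] ((Icc (a n) (b n)).indicator 1) x₀
        ≤ M * ∑ n ∈ s, K * (b n - a n) ^ t * (L t)^[k] f x₀ := by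
          gcongr with n hn
          exact h2 n hn
      _ = _ := by rw [← Finset.sum_mul, ← Finset.mul_sum]; ring
  rw [div_le_iff₀' (by positivity)]
  exact le_of_mul_le_mul_right (by linarith) hpos

/-! ### The upper bound -/

lemma S_mapsTo_uIcc {ε : ℝ} (hε : ε = -1 ∨ ε = 1) (a b : ℝ) :
    MapsTo (S ε) (uIcc a b) (uIcc (S ε a) (S ε b)) := by
  have hs : ∀ {x y : ℝ}, x ≤ y → √(25 - 4 * y) ≤ √(25 - 4 * x) := fun h =>
    Real.sqrt_le_sqrt (by linarith)
  rcases hε with rfl | rfl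
  · exact Monotone.mapsTo_uIcc fun x y h => by have := hs h; unfold S; linarith
  · exact Antitone.mapsTo_uIcc fun x y h => by have := hs h; unfold S; linarith

lemma abs_S_sub_S {ε a b : ℝ} (hε : ε = -1 ∨ ε = 1) (ha : a ≤ 5) (hb : b ≤ 5) :
    |S ε b - S ε a| * (√(25 - 4 * a) + √(25 - 4 * b)) = 2 * |b - a| := by
  have h1 := Real.sq_sqrt (show 0 ≤ 25 - 4 * a by linarith)
  have h2 := Real.sq_sqrt (show 0 ≤ 25 - 4 * b by linarith)
  have h3 : 0 ≤ √(25 - 4 * a) + √(25 - 4 * b) := by positivity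
  have hr : 2 * |b - a| = |2 * (b - a)| := by rw [abs_mul, abs_two]
  rw [← abs_of_nonneg h3, ← abs_mul, hr]
  rcases hε with rfl | rfl
  · congr 1
    unfold S; linarith
  · rw [← abs_neg]
    congr 1
    unfold S; linarith

lemma abs_S_sub_S_le {ε a b : ℝ} (hε : ε = -1 ∨ ε = 1) (ha : a ≤ 5) (hb : b ≤ 5) :
    |S ε b - S ε a| ≤ |b - a| / 2 := by
  have h := abs_S_sub_S hε ha hb
  have h1 := sqrt_five_le_sqrt ha
  have h2 := sqrt_five_le_sqrt hb
  have h3 := two_lt_sqrt_five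
  have h4 := abs_nonneg (S ε b - S ε a)
  nlinarith

/-- The distortion-corrected length `ℓ exp ℓ` contracts by at least the derivative of the branch at
`a`. -/
lemma abs_S_sub_S_mul_exp_le {ε a b : ℝ} (hε : ε = -1 ∨ ε = 1) (ha : a ≤ 5) (hb : b ≤ 5) :
    |S ε b - S ε a| * Real.exp |S ε b - S ε a| ≤
      (√(25 - 4 * a))⁻¹ * (|b - a| * Real.exp |b - a|) := by
  have h := abs_S_sub_S hε ha hb
  have hle := abs_S_sub_S_le hε ha hb
  have hA := sqrt_five_le_sqrt ha
  have hB := sqrt_five_le_sqrt hb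
  have h5 := two_lt_sqrt_five
  have hA2 := Real.sq_sqrt (show 0 ≤ 25 - 4 * a by linarith)
  have hB2 := Real.sq_sqrt (show 0 ≤ 25 - 4 * b by linarith)
  set A := √(25 - 4 * a)
  set B := √(25 - 4 * b)
  set l := |b - a|
  set l' := |S ε b - S ε a|
  have hl : 0 ≤ l := abs_nonneg _
  have hl' : 0 ≤ l' := abs_nonneg _
  have hAB : A - B ≤ l := by
    have : (A - B) * (A + B) ≤ 4 * l := by
      have : b - a ≤ l := le_abs_self _
      nlinarith
    nlinarith
  have hratio : A * l' ≤ (1 + l / 2) * l := by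
    have : 2 * (A * l') ≤ 2 * l + (A - B) * l' := by linarith
    nlinarith
  have he : (1 + l / 2) * Real.exp l' ≤ Real.exp l := by
    calc (1 + l / 2) * Real.exp l' ≤ Real.exp (l / 2) * Real.exp (l / 2) := by
          gcongr
          linarith [Real.add_one_le_exp (l / 2)]
      _ = Real.exp l := by rw [← Real.exp_add]; ring_nf
  have hA0 : 0 < A := by linarith
  rw [← div_eq_inv_mul, le_div_iff₀ hA0]
  calc l' * Real.exp l' * A = A * l' * Real.exp l' := by ring
    _ ≤ (1 + l / 2) * l * Real.exp l' := by gcongr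
    _ = l * ((1 + l / 2) * Real.exp l') := by ring
    _ ≤ l * Real.exp l := by gcongr

/-- Covers of the attractor by images of `[0, 5]` under compositions of `n` branches. -/
lemma exists_cover {t : ℝ} (ht : 0 ≤ t) {J : Set ℝ} (hJ : J ⊆ Icc 0 5)
    (hJS' : ∀ x ∈ J, ∃ y ∈ J, x = S (-1) y ∨ x = S 1 y) {g : ℝ → ℝ} {r : ℝ}
    (hr : 0 ≤ r) (hg0 : ∀ x ∈ Icc (0 : ℝ) 5, 0 ≤ g x)
    (hg : ∀ x ∈ Icc (0 : ℝ) 5, L t g x ≤ r * g x) (n : ℕ) :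
    ∃ (ι : Type) (_ : Fintype ι) (a b : ι → ℝ), (∀ i, a i ∈ Icc (0 : ℝ) 5) ∧
      (∀ i, b i ∈ Icc (0 : ℝ) 5) ∧ (∀ i, |b i - a i| ≤ 5 * (1 / 2) ^ n) ∧
      J ⊆ ⋃ i, uIcc (a i) (b i) ∧
      ∑ i, (|b i - a i| * Real.exp |b i - a i|) ^ t * g (a i) ≤
        r ^ n * ((5 * Real.exp 5) ^ t * g 0) := by
  induction n with
  | zero =>
    refine ⟨Unit, inferInstance, fun _ => 0, fun _ => 5, ?_, ?_, ?_, ?_, ?_⟩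
    · simp
    · simp
    · simp
    · exact fun x hx => mem_iUnion.2 ⟨(), by simpa [uIcc_of_le] using hJ hx⟩
    · simp
  | succ n ih =>
    obtain ⟨ι, _, a, b, ha, hb, hd, hcov, hsum⟩ := ih
    have hsign : ∀ e : Bool,
        (if e then (1 : ℝ) else -1) = -1 ∨ (if e then (1 : ℝ) else -1) = 1 := by
      intro e; cases e <;> simp
    refine ⟨ι × Bool, inferInstance, fun p => S (if p.2 then 1 else -1) (a p.1),
      fun p => S (if p.2 then 1 else -1) (b p.1), fun p => S_mem_Icc (hsign _) (ha _),
      fun p => S_mem_Icc (hsign _) (hb _), fun p => ?_, fun x hx => ?_, ?_⟩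
    · refine (abs_S_sub_S_le (hsign _) (ha _).2 (hb _).2).trans ?_
      rw [pow_succ]
      linarith [hd p.1]
    · obtain ⟨y, hy, h⟩ := hJS' x hx
      obtain ⟨i, hi⟩ := mem_iUnion.1 (hcov hy)
      rcases h with rfl | rfl
      · exact mem_iUnion.2 ⟨(i, false), by simpa using S_mapsTo_uIcc (Or.inl rfl) _ _ hi⟩
      · exact mem_iUnion.2 ⟨(i, true), by simpa using S_mapsTo_uIcc (Or.inr rfl) _ _ hi⟩
    · have hterm : ∀ i, ∀ ε : ℝ, ε = -1 ∨ ε = 1 →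
          (|S ε (b i) - S ε (a i)| * Real.exp |S ε (b i) - S ε (a i)|) ^ t * g (S ε (a i)) ≤
          (|b i - a i| * Real.exp |b i - a i|) ^ t *
            ((25 - 4 * a i) ^ (-t / 2) * g (S ε (a i))) := by
        intro i ε hε
        have hAi : 0 ≤ 25 - 4 * a i := by linarith [(ha i).2]
        have hw : (25 - 4 * a i) ^ (-t / 2) = ((√(25 - 4 * a i))⁻¹) ^ t := by
          rw [Real.sqrt_eq_rpow, ← Real.rpow_neg hAi, ← Real.rpow_mul hAi]
          ring_nf
        rw [← mul_assoc, hw, mul_comm (_ ^ t) ((√(25 - 4 * a i))⁻¹ ^ t),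
          ← Real.mul_rpow (by positivity) (by positivity)]
        refine mul_le_mul_of_nonneg_right ?_ (hg0 _ (S_mem_Icc hε (ha i)))
        exact Real.rpow_le_rpow (by positivity)
          (abs_S_sub_S_mul_exp_le hε (ha i).2 (hb i).2) ht
      rw [Fintype.sum_prod_type]
      have hstep : ∀ i, ∑ e : Bool,
          (|S (if e then 1 else -1) (b i) - S (if e then 1 else -1) (a i)| *
          Real.exp |S (if e then 1 else -1) (b i) - S (if e then 1 else -1) (a i)|) ^ t *
            g (S (if e then 1 else -1) (a i)) ≤
          r * ((|b i - a i| * Real.exp |b i - a i|) ^ t * g (a i)) := by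
        intro i
        rw [Fintype.sum_bool]
        simp only [if_true, Bool.false_eq_true, if_false]
        calc _ ≤ _ := add_le_add (hterm i 1 (Or.inr rfl)) (hterm i (-1) (Or.inl rfl))
          _ = (|b i - a i| * Real.exp |b i - a i|) ^ t * L t g (a i) := by unfold L; ring
          _ ≤ (|b i - a i| * Real.exp |b i - a i|) ^ t * (r * g (a i)) := by
              gcongr
              exact hg _ (ha i)
          _ = _ := by ring
      calc _ ≤ ∑ i, r * ((|b i - a i| * Real.exp |b i - a i|) ^ t * g (a i)) :=
            Finset.sum_le_sum fun i _ => hstep i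
        _ = r * ∑ i, (|b i - a i| * Real.exp |b i - a i|) ^ t * g (a i) := by
            rw [Finset.mul_sum]
        _ ≤ r * (r ^ n * ((5 * Real.exp 5) ^ t * g 0)) := by gcongr
        _ = _ := by ring

/-- If `L_t g ≤ r g` with `r ≤ 1` for some `g` bounded below, then the dimension is at most `t`. -/
lemma dimH_le_of_L_le {t : ℝ} (ht : 0 ≤ t) {J : Set ℝ} (hJ : J ⊆ Icc 0 5)
    (hJS' : ∀ x ∈ J, ∃ y ∈ J, x = S (-1) y ∨ x = S 1 y) {g : ℝ → ℝ} {r m : ℝ} (hm : 0 < m)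
    (hr0 : 0 ≤ r) (hr1 : r ≤ 1) (hmg : ∀ x ∈ Icc (0 : ℝ) 5, m ≤ g x)
    (hg : ∀ x ∈ Icc (0 : ℝ) 5, L t g x ≤ r * g x) : dimH J ≤ ENNReal.ofReal t := by
  refine dimH_le_of_hausdorffMeasure_ne_top ?_
  rw [Real.coe_toNNReal t ht]
  choose ι inst a b ha hb hd hcov hsum using
    exists_cover ht hJ hJS' hr0 (fun x hx => hm.le.trans (hmg x hx)) hg
  set C := (5 * Real.exp 5) ^ t * g 0
  have hC : 0 ≤ C := mul_nonneg (by positivity) (hm.le.trans (hmg 0 (by simp)))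
  have hdiam : ∀ n i, Metric.ediam (uIcc (a n i) (b n i)) = ENNReal.ofReal |b n i - a n i| := by
    intro n i
    rw [uIcc, Real.ediam_Icc, max_sub_min_eq_abs]
  have hlim : Filter.Tendsto (fun n : ℕ => ENNReal.ofReal (5 * (1 / 2 : ℝ) ^ n)) Filter.atTop
      (nhds 0) := by
    rw [← ENNReal.ofReal_zero]
    refine ENNReal.tendsto_ofReal ?_
    simpa using (tendsto_pow_atTop_nhds_zero_of_lt_one (by norm_num : (0 : ℝ) ≤ 1 / 2)
      (by norm_num)).const_mul 5
  have hle := Measure.hausdorffMeasure_le_liminf_sum t J _ hlim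
    (fun n i => uIcc (a n i) (b n i))
    (Filter.Eventually.of_forall fun n i => by
      rw [hdiam]; exact ENNReal.ofReal_le_ofReal (hd n i))
    (Filter.Eventually.of_forall hcov)
  refine ne_top_of_le_ne_top (ENNReal.ofReal_ne_top (r := C / m)) (hle.trans ?_)
  refine Filter.liminf_le_of_le (by isBoundedDefault) fun B hB => ?_
  obtain ⟨n, hn⟩ := hB.exists
  refine hn.trans ?_
  have hsum' : ∑ i, |b n i - a n i| ^ t ≤ C / m := by
    rw [le_div_iff₀ hm, Finset.sum_mul]
    calc ∑ i, |b n i - a n i| ^ t * m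
        ≤ ∑ i, (|b n i - a n i| * Real.exp |b n i - a n i|) ^ t * g (a n i) := by
          gcongr with i
          · exact le_mul_of_one_le_right (abs_nonneg _) (Real.one_le_exp (abs_nonneg _))
          · exact hmg _ (ha n i)
      _ ≤ r ^ n * C := hsum n
      _ ≤ C := mul_le_of_le_one_left hC (pow_le_one₀ hr0 hr1)
  calc ∑ i, Metric.ediam (uIcc (a n i) (b n i)) ^ t
      = ∑ i, ENNReal.ofReal (|b n i - a n i| ^ t) := by
        simp only [hdiam, ENNReal.ofReal_rpow_of_nonneg (abs_nonneg _) ht]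
    _ = ENNReal.ofReal (∑ i, |b n i - a n i| ^ t) :=
        (ENNReal.ofReal_sum_of_nonneg fun i _ => by positivity).symm
    _ ≤ ENNReal.ofReal (C / m) := ENNReal.ofReal_le_ofReal hsum'

/-! ### The two-sided estimate -/

/-- Changing the exponent of the transfer operator. -/
lemma L_eq_rpow_mul_L (s t : ℝ) (f : ℝ → ℝ) {x : ℝ} (hx : x ≤ 5) :
    L s f x = (25 - 4 * x) ^ ((t - s) / 2) * L t f x := by
  unfold L
  rw [← mul_assoc, ← Real.rpow_add (by linarith)]
  ring_nf

lemma tendsto_rpow_sub_mul (t c : ℝ) :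
    Filter.Tendsto (fun s : ℝ => (25 : ℝ) ^ ((t - s) / 2) * c) (nhds t) (nhds c) := by
  have h : Continuous fun s : ℝ => (25 : ℝ) ^ ((t - s) / 2) * c :=
    (Real.continuous_const_rpow (by norm_num)).comp (by fun_prop) |>.mul continuous_const
  simpa using h.tendsto t

lemma L_pos {t : ℝ} {f : ℝ → ℝ} (hf : ∀ x ∈ Icc (0 : ℝ) 5, 0 < f x) {x : ℝ}
    (hx : x ∈ Icc (0 : ℝ) 5) : 0 < L t f x :=
  mul_pos (Real.rpow_pos_of_pos (by linarith [hx.2]) _)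
    (add_pos (hf _ (S_mem_Icc (Or.inl rfl) hx)) (hf _ (S_mem_Icc (Or.inr rfl) hx)))

lemma exists_pos_bounds {f : ℝ → ℝ} (hf : ContinuousOn f (Icc 0 5))
    (hfpos : ∀ x ∈ Icc (0 : ℝ) 5, 0 < f x) :
    ∃ m M : ℝ, 0 < m ∧ ∀ x ∈ Icc (0 : ℝ) 5, m ≤ f x ∧ f x ≤ M := by
  have hne : (Icc (0 : ℝ) 5).Nonempty := ⟨0, by simp⟩
  obtain ⟨p, hp, hmin⟩ := isCompact_Icc.exists_isMinOn hne hf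
  obtain ⟨q, -, hmax⟩ := isCompact_Icc.exists_isMaxOn hne hf
  exact ⟨f p, f q, hfpos p hp, fun x hx => ⟨hmin hx, hmax hx⟩⟩

lemma bddAbove_L_div {t : ℝ} (ht : 0 ≤ t) {g : ℝ → ℝ} {m M : ℝ} (hm : 0 < m)
    (hg : ∀ x ∈ Icc (0 : ℝ) 5, m ≤ g x ∧ g x ≤ M) :
    BddAbove ((fun x => L t g x / g x) '' Icc 0 5) := by
  refine ⟨2 * M / m, ?_⟩
  rintro _ ⟨x, hx, rfl⟩
  have h1 := hg _ (S_mem_Icc (Or.inl rfl) hx)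
  have h2 := hg _ (S_mem_Icc (Or.inr rfl) hx)
  have hw : (25 - 4 * x) ^ (-t / 2) ≤ 1 :=
    Real.rpow_le_one_of_one_le_of_nonpos (by linarith [hx.2]) (by linarith)
  refine div_le_div₀ (by linarith) ?_ hm (hg x hx).1
  calc L t g x ≤ 1 * (g (S (-1) x) + g (S 1 x)) :=
        mul_le_mul_of_nonneg_right hw (by linarith)
    _ ≤ 2 * M := by linarith

theorem stmt_6 (t₀ t₁ : ℝ) (ht₀ : 0 < t₀) (ht₀₁ : t₀ < t₁) (ht₁ : t₁ < 1)
    (f g : ℝ → ℝ)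
    (hf : ContinuousOn f (Set.Icc 0 5)) (hfpos : ∀ x ∈ Set.Icc (0:ℝ) 5, 0 < f x)
    (hg : ContinuousOn g (Set.Icc 0 5)) (hgpos : ∀ x ∈ Set.Icc (0:ℝ) 5, 0 < g x)
    (hinf : 1 < sInf ((fun x => L t₀ f x / f x) '' Set.Icc 0 5))
    (hsup : sSup ((fun x => L t₁ g x / g x) '' Set.Icc 0 5) < 1)
    (J : Set ℝ) (hsub : J ⊆ Set.Icc 0 5) (hne : J.Nonempty) (hcl : IsClosed J)
    (heq : J = S (-1) '' J ∪ S 1 '' J)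
    (hmin : ∀ J' : Set ℝ, J' ⊆ Set.Icc 0 5 → J'.Nonempty → IsClosed J' →
      J' = S (-1) '' J' ∪ S 1 '' J' → J ⊆ J') :
    ENNReal.ofReal t₀ < dimH J ∧ dimH J < ENNReal.ofReal t₁ := by
  have hJS : ∀ x ∈ J, S (-1) x ∈ J ∧ S 1 x ∈ J := fun x hx =>
    ⟨heq.symm.subset (Or.inl (mem_image_of_mem _ hx)),
      heq.symm.subset (Or.inr (mem_image_of_mem _ hx))⟩
  have hJS' : ∀ x ∈ J, ∃ y ∈ J, x = S (-1) y ∨ x = S 1 y := by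
    intro x hx
    rcases heq.subset hx with ⟨y, hy, rfl⟩ | ⟨y, hy, rfl⟩
    exacts [⟨y, hy, Or.inl rfl⟩, ⟨y, hy, Or.inr rfl⟩]
  constructor
  · obtain ⟨m, M, hm, hb⟩ := exists_pos_bounds hf hfpos
    set I := sInf ((fun x => L t₀ f x / f x) '' Set.Icc 0 5)
    have hI : ∀ x ∈ Icc (0 : ℝ) 5, I * f x ≤ L t₀ f x := by
      intro x hx
      rw [← le_div_iff₀ (hfpos x hx)]
      refine csInf_le ⟨0, ?_⟩ ⟨x, hx, rfl⟩
      rintro _ ⟨y, hy, rfl⟩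
      exact (div_pos (L_pos hfpos hy) (hfpos y hy)).le
    obtain ⟨t, hIt, ht⟩ :=
      (((tendsto_rpow_sub_mul t₀ I).eventually_const_lt hinf).filter_mono
        nhdsWithin_le_nhds |>.and (Ioo_mem_nhdsGT ht₀₁)).exists
    refine ((ENNReal.ofReal_lt_ofReal_iff (ht₀.trans ht.1)).2 ht.1).trans_le
      (le_dimH_of_le_L (ht₀.trans ht.1) (ht.2.trans ht₁).le
        (isCompact_Icc.of_isClosed_subset hcl hsub) hne (fun x hx => (hsub hx).2) hJS hJS' hm
        (fun x hx => (hb x (hsub hx)).1) (fun x hx => (hb x (hsub hx)).2) fun x hx => ?_)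
    have hx' := hsub hx
    have hfx := hfpos x hx'
    have hw : (25 : ℝ) ^ ((t₀ - t) / 2) ≤ (25 - 4 * x) ^ ((t₀ - t) / 2) :=
      Real.rpow_le_rpow_of_nonpos (by linarith [hx'.2]) (by linarith [hx'.1])
        (by linarith [ht.1])
    rw [L_eq_rpow_mul_L t t₀ f hx'.2]
    calc f x ≤ 25 ^ ((t₀ - t) / 2) * I * f x := le_mul_of_one_le_left hfx.le hIt.le
      _ = 25 ^ ((t₀ - t) / 2) * (I * f x) := by ring
      _ ≤ 25 ^ ((t₀ - t) / 2) * L t₀ f x := by gcongr; exact hI x hx'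
      _ ≤ _ := by
          gcongr
          exact (L_pos hfpos hx').le
  · obtain ⟨m, M, hm, hb⟩ := exists_pos_bounds hg hgpos
    have hbdd := bddAbove_L_div (ht₀.trans ht₀₁).le hm hb
    set B := sSup ((fun x => L t₁ g x / g x) '' Set.Icc 0 5)
    have hB : ∀ x ∈ Icc (0 : ℝ) 5, L t₁ g x ≤ B * g x := by
      intro x hx
      rw [← div_le_iff₀ (hgpos x hx)]
      exact le_csSup hbdd ⟨x, hx, rfl⟩
    have hB0 : 0 ≤ B := by
      refine Real.sSup_nonneg ?_
      rintro _ ⟨y, hy, rfl⟩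
      exact (div_pos (L_pos hgpos hy) (hgpos y hy)).le
    obtain ⟨t, hBt, ht⟩ :=
      (((tendsto_rpow_sub_mul t₁ B).eventually_lt_const hsup).filter_mono
        nhdsWithin_le_nhds |>.and (Ioo_mem_nhdsLT ht₀₁)).exists
    refine (dimH_le_of_L_le (ht₀.trans ht.1).le hsub hJS' hm (by positivity) hBt.le
      (fun x hx => (hb x hx).1) fun x hx => ?_).trans_lt
      ((ENNReal.ofReal_lt_ofReal_iff (ht₀.trans ht₀₁)).2 ht.2)
    have hw : (25 - 4 * x) ^ ((t₁ - t) / 2) ≤ (25 : ℝ) ^ ((t₁ - t) / 2) :=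
      Real.rpow_le_rpow (by linarith [hx.2]) (by linarith [hx.1]) (by linarith [ht.2])
    rw [L_eq_rpow_mul_L t t₁ g hx.2]
    calc _ ≤ 25 ^ ((t₁ - t) / 2) * L t₁ g x := by
          gcongr
          exact (L_pos hgpos hx).le
      _ ≤ 25 ^ ((t₁ - t) / 2) * (B * g x) := by gcongr; exact hB x hx
      _ = _ := by ring
end

section
/- Let R_V(z) = z(6z + 3)(6z + 5). If J_V ⊆ [−1, 0] is nonempty, closed, satisfies J_V = R_V^{−1}(J_V) ∩ [−1, 0], and is contained in every nonempty closed subset of [−1,0] satisfying this set equation, then 0.49195457005266 ≤ dim_H(J_V) ≤ 0.49195457005267. -/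
open Set MeasureTheory

/-- The decimation polynomial `R_V(z) = z(6z+3)(6z+5)` associated with the
Vicsek set. -/
def RV (z : ℝ) : ℝ := z * (6 * z + 3) * (6 * z + 5)

/-- A finite family of contractions `S i` of a set `J` with disjoint images covering `J`, together
with expansion rates `D` (to be thought of as the derivative of the inverse branches) whose
distortion on a set of size `r` is at most `1 + c * r`. -/
structure ConformalSystem {X ι : Type} [MetricSpace X] (J : Set X) (S : ι → X → X) (D : X → ℝ)
    (m M c gap : ℝ) : Prop where
  one_lt : 1 < m
  c_nonneg : 0 ≤ c
  gap_pos : 0 < gap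
  mapsTo : ∀ i, MapsTo (S i) J J
  surj : ∀ y ∈ J, ∃ i, ∃ x ∈ J, S i x = y
  le_rate : ∀ y ∈ J, m ≤ D y
  rate_le : ∀ y ∈ J, D y ≤ M
  contract : ∀ i, ∀ x ∈ J, ∀ x' ∈ J, m * dist (S i x) (S i x') ≤ dist x x'
  dist_le : ∀ i, ∀ x ∈ J, ∀ x' ∈ J, ∀ y ∈ J, ∀ r, dist (S i x) (S i y) ≤ r →
    dist (S i x') (S i y) ≤ r → dist x x' ≤ D (S i y) * (1 + c * r) * dist (S i x) (S i x')
  le_dist : ∀ i, ∀ x ∈ J, ∀ x' ∈ J, ∀ y ∈ J, ∀ r, dist (S i x) (S i y) ≤ r →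
    dist (S i x') (S i y) ≤ r → D (S i y) * dist (S i x) (S i x') ≤ (1 + c * r) * dist x x'
  rate_distortion : ∀ i, ∀ x ∈ J, ∀ y ∈ J, ∀ r, dist (S i x) (S i y) ≤ r →
    D (S i y) ≤ (1 + c * r) * D (S i x)
  le_gap : ∀ i k, i ≠ k → ∀ x ∈ J, ∀ y ∈ J, gap ≤ dist (S i x) (S k y)

/-- The transfer operator with weights `D ^ (-t)`. -/
noncomputable def transfer {X ι : Type} [Fintype ι] (S : ι → X → X) (D : X → ℝ) (t : ℝ)
    (g : X → ℝ) (x : X) : ℝ :=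
  ∑ i, D (S i x) ^ (-t) * g (S i x)

lemma transfer_smul {X ι : Type} [Fintype ι] {S : ι → X → X} {D : X → ℝ} (t a : ℝ)
    (g : X → ℝ) :
    transfer S D t (a • g) = a • transfer S D t g := by
  funext x
  simp only [transfer, Pi.smul_apply, smul_eq_mul, Finset.mul_sum]
  exact Finset.sum_congr rfl fun i _ => by ring

lemma iterate_transfer_smul {X ι : Type} [Fintype ι] {S : ι → X → X} {D : X → ℝ} (t a : ℝ)
    (N : ℕ) (g : X → ℝ) :
    (transfer S D t)^[N] (a • g) = a • (transfer S D t)^[N] g :=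
  (Function.Semiconj.iterate_right (f := fun g : X → ℝ => a • g)
    (fun g => (transfer_smul t a g).symm) N g).symm

lemma transfer_sum {X ι κ : Type} [Fintype ι] {S : ι → X → X} {D : X → ℝ} (T : Finset κ)
    (t : ℝ) (g : κ → X → ℝ) :
    transfer S D t (∑ k ∈ T, g k) = ∑ k ∈ T, transfer S D t (g k) := by
  funext x
  simp only [transfer, Finset.sum_apply, Finset.mul_sum]
  exact Finset.sum_comm

lemma iterate_transfer_sum {X ι κ : Type} [Fintype ι] {S : ι → X → X} {D : X → ℝ}
    (T : Finset κ) (t : ℝ) (N : ℕ) :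
    ∀ g : κ → X → ℝ,
      (transfer S D t)^[N] (∑ k ∈ T, g k) = ∑ k ∈ T, (transfer S D t)^[N] (g k) := by
  induction N with
  | zero => exact fun g => rfl
  | succ N ih =>
    intro g
    simp only [Function.iterate_succ_apply, transfer_sum, ih]

namespace ConformalSystem

variable {X ι : Type} [MetricSpace X] {J : Set X} {S : ι → X → X} {D : X → ℝ}
  {m M c gap : ℝ}

lemma one_add_mul_rpow_le_exp {c r t : ℝ} (hc : 0 ≤ c) (hr : 0 ≤ r) (ht : 0 ≤ t) :
    (1 + c * r) ^ t ≤ Real.exp (t * c * r) := by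
  have h : 1 + c * r ≤ Real.exp (c * r) := by linarith [Real.add_one_le_exp (c * r)]
  calc (1 + c * r) ^ t ≤ (Real.exp (c * r)) ^ t := by gcongr
    _ = Real.exp (t * c * r) := by rw [← Real.exp_mul]; ring_nf

lemma rate_pos (h : ConformalSystem J S D m M c gap) {y : X} (hy : y ∈ J) : 0 < D y := by
  linarith [h.le_rate y hy, h.one_lt]

variable [Fintype ι]

/-- Covers of `J` by iterated images, with uniformly bounded `s`-dimensional sums. -/
lemma exists_cover (h : ConformalSystem J S D m M c gap) {s : ℝ} (hs : 0 ≤ s) {f : X → ℝ}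
    (hf : ∀ x ∈ J, 0 ≤ f x) (hL : ∀ x ∈ J, transfer S D s f x ≤ f x) {x₀ : X} (hx₀ : x₀ ∈ J)
    {d₀ : ℝ} (hd₀ : ∀ x ∈ J, ∀ y ∈ J, dist x y ≤ d₀) (n : ℕ) :
    ∃ (κ : Type) (_ : Fintype κ) (z : κ → X) (d : κ → ℝ) (A : κ → Set X),
      J ⊆ ⋃ k, A k ∧ (∀ k, A k ⊆ J) ∧ (∀ k, z k ∈ A k) ∧
      (∀ k, ∀ a ∈ A k, ∀ b ∈ A k, dist a b ≤ d k) ∧ (∀ k, 0 ≤ d k) ∧ (∀ k, d k ≤ d₀ / m ^ n) ∧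
      ∑ k, d k ^ s * f (z k) * Real.exp (s * c * m / (m - 1) * d k) ≤
        d₀ ^ s * f x₀ * Real.exp (s * c * m / (m - 1) * d₀) := by
  have hm := h.one_lt
  have hm0 : 0 < m := by linarith
  have hc := h.c_nonneg
  induction n with
  | zero =>
    refine ⟨Unit, inferInstance, fun _ => x₀, fun _ => d₀, fun _ => J, ?_, ?_, ?_, ?_, ?_, ?_, ?_⟩
    · exact fun x hx => mem_iUnion.2 ⟨(), hx⟩
    · simp
    · simpa using hx₀
    · simpa using hd₀
    · intro _
      simpa using hd₀ x₀ hx₀ x₀ hx₀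
    · simp
    · simp
  | succ n ih =>
    obtain ⟨κ, _, z, d, A, hcov, hAJ, hz, hdist, hd, hdn, hsum⟩ := ih
    have hzJ : ∀ k, z k ∈ J := fun k => hAJ k (hz k)
    refine ⟨κ × ι, inferInstance, fun p => S p.2 (z p.1),
      fun p => min (d p.1 / m) ((1 + c * d p.1) * d p.1 / D (S p.2 (z p.1))),
      fun p => S p.2 '' A p.1, ?_, ?_, ?_, ?_, ?_, ?_, ?_⟩
    · intro y hy
      obtain ⟨i, x, hx, rfl⟩ := h.surj y hy
      obtain ⟨k, hk⟩ := mem_iUnion.1 (hcov hx)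
      exact mem_iUnion.2 ⟨(k, i), mem_image_of_mem _ hk⟩
    · rintro ⟨k, i⟩ _ ⟨x, hx, rfl⟩
      exact h.mapsTo i (hAJ k hx)
    · rintro ⟨k, i⟩
      exact mem_image_of_mem _ (hz k)
    · rintro ⟨k, i⟩ _ ⟨a, ha, rfl⟩ _ ⟨b, hb, rfl⟩
      have key : ∀ u ∈ A k, ∀ v ∈ A k, dist (S i u) (S i v) ≤ d k / m := fun u hu v hv => by
        rw [le_div_iff₀ hm0, mul_comm]
        exact (h.contract i u (hAJ k hu) v (hAJ k hv)).trans (hdist k u hu v hv)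
      refine le_min (key a ha b hb) ?_
      have hle : d k / m ≤ d k := div_le_self (hd k) hm.le
      rw [le_div_iff₀ (h.rate_pos (h.mapsTo i (hzJ k))), mul_comm]
      refine (h.le_dist i a (hAJ k ha) b (hAJ k hb) (z k) (hzJ k) (d k)
        ((key a ha _ (hz k)).trans hle) ((key b hb _ (hz k)).trans hle)).trans ?_
      have := hd k
      gcongr
      exact hdist k a ha b hb
    · rintro ⟨k, i⟩
      have := hd k
      have := h.rate_pos (h.mapsTo i (hzJ k))
      dsimp only
      positivity
    · rintro ⟨k, i⟩
      refine (min_le_left _ _).trans ?_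
      rw [pow_succ, ← div_div]
      have := hdn k
      dsimp only
      gcongr
    · rw [Fintype.sum_prod_type]
      refine le_trans (Finset.sum_le_sum fun k _ => ?_) hsum
      dsimp only
      have hdk := hd k
      have hterm : ∀ i, min (d k / m) ((1 + c * d k) * d k / D (S i (z k))) ^ s * f (S i (z k)) *
          Real.exp (s * c * m / (m - 1) *
            min (d k / m) ((1 + c * d k) * d k / D (S i (z k)))) ≤
          (d k ^ s * Real.exp (s * c * m / (m - 1) * d k)) *
            (D (S i (z k)) ^ (-s) * f (S i (z k))) := fun i => by
        have hSJ := h.mapsTo i (hzJ k)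
        have hDp := h.rate_pos hSJ
        have hfp := hf _ hSJ
        have hm1 : 0 < m - 1 := by linarith
        have e1 : min (d k / m) ((1 + c * d k) * d k / D (S i (z k))) ^ s ≤
            Real.exp (s * c * d k) * d k ^ s * D (S i (z k)) ^ (-s) := by
          calc _ ≤ ((1 + c * d k) * d k / D (S i (z k))) ^ s := by
                gcongr
                exact min_le_right _ _
            _ = (1 + c * d k) ^ s * d k ^ s * D (S i (z k)) ^ (-s) := by
                rw [Real.div_rpow (by positivity) hDp.le, Real.mul_rpow (by positivity) hdk,
                  Real.rpow_neg hDp.le, div_eq_mul_inv]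
            _ ≤ _ := by
                gcongr
                exact one_add_mul_rpow_le_exp hc hdk hs
        have e2 : Real.exp (s * c * m / (m - 1) *
            min (d k / m) ((1 + c * d k) * d k / D (S i (z k)))) ≤
            Real.exp (s * c * m / (m - 1) * (d k / m)) := by
          gcongr
          exact min_le_left _ _
        have e3 : Real.exp (s * c * d k) * Real.exp (s * c * m / (m - 1) * (d k / m)) =
            Real.exp (s * c * m / (m - 1) * d k) := by
          rw [← Real.exp_add]
          congr 1
          field_simp
          ring
        calc _ ≤ (Real.exp (s * c * d k) * d k ^ s * D (S i (z k)) ^ (-s)) * f (S i (z k)) *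
              Real.exp (s * c * m / (m - 1) * (d k / m)) := by gcongr
          _ = (d k ^ s * (Real.exp (s * c * d k) * Real.exp (s * c * m / (m - 1) * (d k / m)))) *
              (D (S i (z k)) ^ (-s) * f (S i (z k))) := by ring
          _ = _ := by rw [e3]
      refine (Finset.sum_le_sum fun i _ => hterm i).trans ?_
      rw [← Finset.mul_sum]
      have := hL _ (hzJ k)
      rw [transfer] at this
      calc _ ≤ (d k ^ s * Real.exp (s * c * m / (m - 1) * d k)) * f (z k) := by gcongr
        _ = _ := by ring

/-- A positive subinvariant function of the transfer operator bounds the dimension above. -/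
theorem dimH_le (h : ConformalSystem J S D m M c gap) (hne : J.Nonempty) {s : ℝ} (hs : 0 ≤ s)
    {f : X → ℝ} {a : ℝ} (ha : 0 < a) (hf : ∀ x ∈ J, a ≤ f x)
    (hL : ∀ x ∈ J, transfer S D s f x ≤ f x) (hJ : Bornology.IsBounded J) :
    dimH J ≤ ENNReal.ofReal s := by
  borelize X
  obtain ⟨x₀, hx₀⟩ := hne
  obtain ⟨d₀, hd₀⟩ := Metric.isBounded_iff.1 hJ
  have hd₀0 : 0 ≤ d₀ := by simpa using hd₀ hx₀ hx₀
  have hm := h.one_lt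
  choose κ hκ z d A hcov hAJ hz hdist hd hdn hsum using
    h.exists_cover hs (fun x hx => ha.le.trans (hf x hx)) hL hx₀ (fun x hx y hy => hd₀ hx hy)
  set K := d₀ ^ s * f x₀ * Real.exp (s * c * m / (m - 1) * d₀) with hK
  have hdiam : ∀ n k, Metric.ediam (A n k) ≤ ENNReal.ofReal (d n k) := fun n k =>
    Metric.ediam_le fun x hx y hy => by
      rw [edist_dist]
      exact ENNReal.ofReal_le_ofReal (hdist n k x hx y hy)
  have hlim : Filter.Tendsto (fun n : ℕ => ENNReal.ofReal (d₀ / m ^ n)) Filter.atTop (nhds 0) := by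
    have := (tendsto_pow_atTop_atTop_of_one_lt hm).const_div_atTop d₀
    simpa [Function.comp_def] using (ENNReal.continuous_ofReal.tendsto 0).comp this
  have hbound : ∀ n, ∑ k, Metric.ediam (A n k) ^ s ≤ ENNReal.ofReal (K / a) := fun n => by
    calc ∑ k, Metric.ediam (A n k) ^ s ≤ ∑ k, ENNReal.ofReal (d n k ^ s) := by
          refine Finset.sum_le_sum fun k _ => ?_
          rw [← ENNReal.ofReal_rpow_of_nonneg (hd n k) hs]
          exact ENNReal.rpow_le_rpow (hdiam n k) hs
      _ = ENNReal.ofReal (∑ k, d n k ^ s) := by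
          rw [ENNReal.ofReal_sum_of_nonneg fun k _ => Real.rpow_nonneg (hd n k) s]
      _ ≤ _ := by
          refine ENNReal.ofReal_le_ofReal ?_
          rw [le_div_iff₀ ha, Finset.sum_mul]
          refine le_trans (Finset.sum_le_sum fun k _ => ?_) (hsum n)
          have h1 : a ≤ f (z n k) := hf _ (hAJ n k (hz n k))
          have h2 : 1 ≤ Real.exp (s * c * m / (m - 1) * d n k) := by
            refine Real.one_le_exp ?_
            have := hd n k
            have := h.c_nonneg
            have : 0 < m - 1 := by linarith
            positivity
          have h3 : 0 ≤ d n k ^ s := Real.rpow_nonneg (hd n k) s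
          calc d n k ^ s * a ≤ d n k ^ s * f (z n k) := by gcongr
            _ ≤ _ := le_mul_of_one_le_right (mul_nonneg h3 (ha.le.trans h1)) h2
  have hmeas := Measure.hausdorffMeasure_le_liminf_sum s J (fun n => ENNReal.ofReal (d₀ / m ^ n))
    hlim A (Filter.Eventually.of_forall fun n k =>
      (hdiam n k).trans (ENNReal.ofReal_le_ofReal (hdn n k))) (Filter.Eventually.of_forall hcov)
  have hfin : Measure.hausdorffMeasure s J ≤ ENNReal.ofReal (K / a) :=
    hmeas.trans ((Filter.liminf_le_liminf (Filter.Eventually.of_forall hbound)).trans (by simp))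
  have := dimH_le_of_hausdorffMeasure_ne_top (d := s.toNNReal) (s := J) (by
    rw [Real.coe_toNNReal _ hs]
    exact ne_top_of_le_ne_top ENNReal.ofReal_ne_top hfin)
  exact this

lemma transfer_mono (h : ConformalSystem J S D m M c gap) (t : ℝ) {g g' : X → ℝ}
    (hg : ∀ x ∈ J, g x ≤ g' x) : ∀ x ∈ J, transfer S D t g x ≤ transfer S D t g' x := by
  intro x hx
  refine Finset.sum_le_sum fun i _ => ?_
  have hS := h.mapsTo i hx
  exact mul_le_mul_of_nonneg_left (hg _ hS) (Real.rpow_nonneg (h.rate_pos hS).le _)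

lemma iterate_transfer_mono (h : ConformalSystem J S D m M c gap) (t : ℝ) (N : ℕ) :
    ∀ {g g' : X → ℝ}, (∀ x ∈ J, g x ≤ g' x) →
      ∀ x ∈ J, (transfer S D t)^[N] g x ≤ (transfer S D t)^[N] g' x := by
  induction N with
  | zero => exact fun hg => hg
  | succ N ih => exact fun hg => ih (h.transfer_mono t hg)

/-- The mass given by the transfer operator to a set of diameter at least `gap`. -/
lemma iterate_transfer_indicator_le_of_gap_le (h : ConformalSystem J S D m M c gap) {t : ℝ}
    (ht : 0 ≤ t) {f : X → ℝ} {a : ℝ} (ha : 0 < a) (hf : ∀ x ∈ J, a ≤ f x) {C B r : ℝ}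
    (hC : 0 ≤ C) (hr : gap ≤ r) (hrB : r ≤ B) (A : Set X) (N : ℕ) {x : X} (hx : x ∈ J) :
    (transfer S D t)^[N] (A.indicator 1) x ≤
      a⁻¹ * gap ^ (-t) * Real.exp (C * B) * r ^ t * Real.exp (-(C * r)) *
        (transfer S D t)^[N] f x := by
  have hg := h.gap_pos
  have hle : ∀ y ∈ J, A.indicator (1 : X → ℝ) y ≤
      ((a⁻¹ * gap ^ (-t) * Real.exp (C * B) * r ^ t * Real.exp (-(C * r))) • f) y := by
    intro y hy
    have h1 : A.indicator (1 : X → ℝ) y ≤ 1 := indicator_le_self' (by simp) y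
    have h2 : 1 ≤ a⁻¹ * f y := by
      rw [← inv_mul_cancel₀ ha.ne']
      gcongr
      exact hf y hy
    have h3 : 1 ≤ gap ^ (-t) * r ^ t := by
      rw [Real.rpow_neg hg.le, ← inv_mul_cancel₀ (Real.rpow_pos_of_pos hg t).ne']
      gcongr
    have h4 : 1 ≤ Real.exp (C * B) * Real.exp (-(C * r)) := by
      rw [← Real.exp_add]
      refine Real.one_le_exp ?_
      nlinarith
    calc A.indicator (1 : X → ℝ) y ≤ 1 * 1 * 1 := by simpa using h1
      _ ≤ (a⁻¹ * f y) * (gap ^ (-t) * r ^ t) * (Real.exp (C * B) * Real.exp (-(C * r))) := by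
        gcongr
      _ = _ := by
        simp only [Pi.smul_apply, smul_eq_mul]
        ring
  have := h.iterate_transfer_mono t N hle x hx
  rwa [iterate_transfer_smul] at this

/-- One step of renormalisation: a set of diameter less than `gap` is blown up by a single
branch. -/
lemma transfer_indicator_le (h : ConformalSystem J S D m M c gap) {t : ℝ} (ht : 0 ≤ t) {r : ℝ}
    (hr0 : 0 < r) (hrg : r < gap) {A : Set X} (hA : ∀ a ∈ A, ∀ b ∈ A, dist a b ≤ r) {i : ι}
    {y : X} (hy : y ∈ J) (hyA : S i y ∈ A) :
    (∀ x ∈ J, transfer S D t (A.indicator 1) x ≤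
      ((r ^ t * Real.exp (2 * t * c * r) / (r * D (S i y) * (1 + c * r)) ^ t) •
        (J ∩ S i ⁻¹' A).indicator (1 : X → ℝ)) x) := by
  classical
  intro x hx
  have hc := h.c_nonneg
  have hDy := h.rate_pos (h.mapsTo i hy)
  have hDx := h.rate_pos (h.mapsTo i hx)
  have hzero : ∀ k, k ≠ i → S k x ∉ A := fun k hk hmem =>
    absurd (hA _ hmem _ hyA) (not_le.2 (hrg.trans_le (h.le_gap k i hk x hx y hy)))
  rw [transfer, Finset.sum_eq_single i (fun k _ hk => by
    rw [indicator_of_notMem (hzero k hk), mul_zero]) (by simp)]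
  by_cases hxA : S i x ∈ A
  · have hmem : x ∈ J ∩ S i ⁻¹' A := ⟨hx, hxA⟩
    rw [Pi.smul_apply, indicator_of_mem hxA, indicator_of_mem hmem]
    simp only [Pi.one_apply, mul_one, smul_eq_mul]
    have hrate := h.rate_distortion i x hx y hy r (hA _ hxA _ hyA)
    have hpos : 0 < 1 + c * r := by positivity
    rw [Real.mul_rpow (by positivity) hpos.le, Real.mul_rpow hr0.le hDy.le, Real.rpow_neg hDx.le,
      le_div_iff₀ (by positivity), inv_mul_le_iff₀ (by positivity)]
    have h1 : D (S i y) ^ t ≤ (1 + c * r) ^ t * D (S i x) ^ t := by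
      rw [← Real.mul_rpow hpos.le hDx.le]
      gcongr
    have h2 := one_add_mul_rpow_le_exp hc hr0.le ht
    have h3 : Real.exp (2 * t * c * r) = Real.exp (t * c * r) * Real.exp (t * c * r) := by
      rw [← Real.exp_add]
      ring_nf
    calc r ^ t * D (S i y) ^ t * (1 + c * r) ^ t
        ≤ r ^ t * ((1 + c * r) ^ t * D (S i x) ^ t) * (1 + c * r) ^ t := by gcongr
      _ ≤ r ^ t * (Real.exp (t * c * r) * D (S i x) ^ t) * Real.exp (t * c * r) := by gcongr
      _ = _ := by rw [h3]; ring
  · have hmem : x ∉ J ∩ S i ⁻¹' A := fun hm => hxA hm.2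
    rw [Pi.smul_apply, indicator_of_notMem hxA, indicator_of_notMem hmem]
    simp

/-- The mass given by the transfer operator to a set of diameter `r` is `O(r ^ t)`. -/
lemma iterate_transfer_indicator_le (h : ConformalSystem J S D m M c gap) {t : ℝ}
    (ht : 0 ≤ t) {f : X → ℝ} {a : ℝ} (ha : 0 < a) (hf : ∀ x ∈ J, a ≤ f x)
    (hL : ∀ x ∈ J, f x ≤ transfer S D t f x) (k : ℕ) :
    ∀ r, 0 < r → gap / m ^ k ≤ r → r ≤ gap * M * (1 + c * gap) → ∀ A ⊆ J,
      (∀ a ∈ A, ∀ b ∈ A, dist a b ≤ r) → ∀ N, k ≤ N → ∀ x ∈ J,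
      (transfer S D t)^[N] (A.indicator 1) x ≤
        a⁻¹ * gap ^ (-t) *
          Real.exp (2 * t * c / (m - 1) * (gap * M * (1 + c * gap))) * r ^ t *
          Real.exp (-(2 * t * c / (m - 1) * r)) * (transfer S D t)^[N] f x := by
  have hm := h.one_lt
  have hm0 : 0 < m := by linarith
  have hm1 : 0 < m - 1 := by linarith
  have hc := h.c_nonneg
  have hg := h.gap_pos
  have hC : 0 ≤ 2 * t * c / (m - 1) := by positivity
  have hfN : ∀ N, ∀ x ∈ J, 0 ≤ (transfer S D t)^[N] f x := fun N x hx => by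
    have := h.iterate_transfer_mono t N (g := (0 : ℝ) • f) (g' := f)
      (fun y hy => by simpa using ha.le.trans (hf y hy)) x hx
    rw [iterate_transfer_smul] at this
    simpa using this
  induction k with
  | zero =>
    intro r _ hr hrB A _ _ N _ x hx
    exact h.iterate_transfer_indicator_le_of_gap_le ht ha hf hC (by simpa using hr) hrB A N hx
  | succ k ih =>
    intro r hr0 hr hrB A hAJ hA N hN x hx
    rcases le_or_gt gap r with hgr | hrg
    · exact h.iterate_transfer_indicator_le_of_gap_le ht ha hf hC hgr hrB A N hx
    rcases A.eq_empty_or_nonempty with rfl | ⟨y', hy'⟩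
    · have h0 : (∅ : Set X).indicator (1 : X → ℝ) = (0 : ℝ) • f := by
        rw [indicator_empty, zero_smul]
        rfl
      rw [h0, iterate_transfer_smul]
      have := hfN N x hx
      simp only [zero_smul, Pi.zero_apply]
      positivity
    obtain ⟨i, y, hy, rfl⟩ := h.surj y' (hAJ hy')
    obtain ⟨N, rfl⟩ : ∃ N', N = N' + 1 := ⟨N - 1, by omega⟩
    have hDy := h.rate_pos (h.mapsTo i hy)
    have hmD := h.le_rate _ (h.mapsTo i hy)
    have hDM := h.rate_le _ (h.mapsTo i hy)
    set r' := r * D (S i y) * (1 + c * r) with hr'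
    have hone : 1 ≤ 1 + c * r := by
      have : 0 ≤ c * r := by positivity
      linarith
    have hr'0 : 0 < r' := by positivity
    have hmr : m * r ≤ r' := by
      calc m * r = r * m * 1 := by ring
        _ ≤ r' := by rw [hr']; gcongr
    have hr'k : gap / m ^ k ≤ r' := by
      refine le_trans ?_ hmr
      rw [pow_succ, ← div_div, div_le_iff₀ hm0] at hr
      linarith
    have hr'B : r' ≤ gap * M * (1 + c * gap) := by
      have hM : 0 ≤ M := by linarith
      rw [hr']
      gcongr
    have hstep := h.iterate_transfer_mono t N
      (h.transfer_indicator_le ht hr0 hrg hA hy hy') x hx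
    rw [iterate_transfer_smul] at hstep
    have hind := ih r' hr'0 hr'k hr'B (J ∩ S i ⁻¹' A) inter_subset_left
      (fun u hu v hv => by
        refine (h.dist_le i u hu.1 v hv.1 y hy r (hA _ hu.2 _ hy') (hA _ hv.2 _ hy')).trans ?_
        rw [hr']
        calc _ ≤ D (S i y) * (1 + c * r) * r := by
              gcongr
              exact hA _ hu.2 _ hv.2
          _ = _ := by ring) N (by omega) x hx
    have hgrow := h.iterate_transfer_mono t N hL x hx
    rw [Function.iterate_succ_apply, Function.iterate_succ_apply]
    have hexp : Real.exp (2 * t * c * r) * Real.exp (-(2 * t * c / (m - 1) * r')) ≤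
        Real.exp (-(2 * t * c / (m - 1) * r)) := by
      rw [← Real.exp_add]
      refine Real.exp_le_exp.2 ?_
      have : 2 * t * c / (m - 1) * (m * r) ≤ 2 * t * c / (m - 1) * r' := by gcongr
      have e : 2 * t * c * r = 2 * t * c / (m - 1) * (m * r) - 2 * t * c / (m - 1) * r := by
        field_simp
      linarith
    have hN := hfN N x hx
    refine hstep.trans ?_
    rw [Pi.smul_apply, smul_eq_mul]
    set K := a⁻¹ * gap ^ (-t) * Real.exp (2 * t * c / (m - 1) * (gap * M * (1 + c * gap))) with hK
    have hK0 : 0 ≤ K := by positivity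
    have hrt : 0 < r' ^ t := Real.rpow_pos_of_pos hr'0 t
    calc r ^ t * Real.exp (2 * t * c * r) / r' ^ t *
          (transfer S D t)^[N] ((J ∩ S i ⁻¹' A).indicator 1) x
        ≤ r ^ t * Real.exp (2 * t * c * r) / r' ^ t *
          (K * r' ^ t * Real.exp (-(2 * t * c / (m - 1) * r')) * (transfer S D t)^[N] f x) := by
          gcongr
      _ = K * r ^ t * (Real.exp (2 * t * c * r) * Real.exp (-(2 * t * c / (m - 1) * r'))) *
          (transfer S D t)^[N] f x := by field_simp
      _ ≤ _ := by gcongr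

/-- A lower bound for the `t`-dimensional sum of a finite cover by small sets. -/
lemma exists_le_sum_rpow (h : ConformalSystem J S D m M c gap) (hne : J.Nonempty) {t : ℝ}
    (ht : 0 ≤ t) {f : X → ℝ} {a b : ℝ} (ha : 0 < a) (hf : ∀ x ∈ J, a ≤ f x) (hfb : ∀ x ∈ J, f x ≤ b)
    (hL : ∀ x ∈ J, f x ≤ transfer S D t f x) :
    ∃ K > 0, ∀ {κ : Type} (T : Finset κ) (A : κ → Set X) (r : κ → ℝ), (∀ k ∈ T, 0 < r k) →
      (∀ k ∈ T, r k ≤ gap) → (∀ k ∈ T, ∀ x ∈ A k, ∀ y ∈ A k, dist x y ≤ r k) →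
      J ⊆ ⋃ k ∈ T, A k → K ≤ ∑ k ∈ T, r k ^ t := by
  obtain ⟨x, hx⟩ := hne
  have hm := h.one_lt
  have hm0 : 0 < m := by linarith
  have hc := h.c_nonneg
  have hg := h.gap_pos
  have hm1 : 0 < m - 1 := by linarith
  have hb : 0 < b := ha.trans_le ((hf x hx).trans (hfb x hx))
  have hM : 1 ≤ M := by
    obtain ⟨i, u, hu, -⟩ := h.surj x hx
    linarith [h.le_rate x hx, h.rate_le x hx]
  set K := a⁻¹ * gap ^ (-t) * Real.exp (2 * t * c / (m - 1) * (gap * M * (1 + c * gap))) with hK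
  have hK0 : 0 < K := by positivity
  refine ⟨(b * K)⁻¹, by positivity, ?_⟩
  intro κ T A r hr0 hrg hA hcov
  have hex : ∀ k : κ, ∃ n : ℕ, k ∈ T → gap / m ^ n ≤ r k := fun k => by
    by_cases hk : k ∈ T
    · obtain ⟨n, hn⟩ := pow_unbounded_of_one_lt (gap / r k) hm
      refine ⟨n, fun _ => ?_⟩
      have := hr0 k hk
      rw [div_lt_iff₀ this] at hn
      rw [div_le_iff₀ (by positivity)]
      linarith
    · exact ⟨0, fun h => absurd h hk⟩
  choose n hn using hex
  set N := T.sup n with hN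
  have hgB : gap ≤ gap * M * (1 + c * gap) := by
    have : 1 ≤ 1 + c * gap := by
      have : 0 ≤ c * gap := by positivity
      linarith
    calc gap = gap * 1 * 1 := by ring
      _ ≤ _ := by gcongr
  have hfx : ∀ N, a ≤ (transfer S D t)^[N] f x := fun N => by
    induction N with
    | zero => exact hf x hx
    | succ N ih =>
      rw [Function.iterate_succ_apply]
      exact ih.trans (h.iterate_transfer_mono t N hL x hx)
  have hpt : ∀ y ∈ J, f y ≤ (b • ∑ k ∈ T, (J ∩ A k).indicator (1 : X → ℝ)) y := by
    intro y hy
    obtain ⟨k, hk, hyk⟩ := mem_iUnion₂.1 (hcov hy)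
    have h1 : (1 : ℝ) ≤ ∑ k ∈ T, (J ∩ A k).indicator (1 : X → ℝ) y := by
      have h2 : (J ∩ A k).indicator (1 : X → ℝ) y = 1 :=
        indicator_of_mem (mem_inter hy hyk) _
      rw [← h2]
      exact Finset.single_le_sum (f := fun k => (J ∩ A k).indicator (1 : X → ℝ) y)
        (fun j _ => indicator_nonneg (by simp) y) hk
    simp only [Pi.smul_apply, Finset.sum_apply, smul_eq_mul]
    calc f y ≤ b * 1 := by simpa using hfb y hy
      _ ≤ _ := by gcongr
  have hmain := h.iterate_transfer_mono t N hpt x hx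
  rw [iterate_transfer_smul, iterate_transfer_sum] at hmain
  simp only [Pi.smul_apply, Finset.sum_apply, smul_eq_mul] at hmain
  have hpos : 0 < (transfer S D t)^[N] f x := ha.trans_le (hfx N)
  have hterm : ∀ k ∈ T, (transfer S D t)^[N] ((J ∩ A k).indicator 1) x ≤
      K * r k ^ t * (transfer S D t)^[N] f x := fun k hk => by
    have hrk := hr0 k hk
    refine (h.iterate_transfer_indicator_le ht ha hf hL (n k) (r k) hrk (hn k hk)
      ((hrg k hk).trans hgB) (J ∩ A k) inter_subset_left
      (fun u hu v hv => hA k hk u hu.2 v hv.2) N (Finset.le_sup hk) x hx).trans ?_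
    rw [← hK]
    have : Real.exp (-(2 * t * c / (m - 1) * r k)) ≤ 1 := by
      rw [Real.exp_le_one_iff]
      have : 0 ≤ 2 * t * c / (m - 1) * r k := by positivity
      linarith
    calc _ ≤ K * r k ^ t * 1 * (transfer S D t)^[N] f x := by gcongr
      _ = _ := by ring
  have hfinal : (transfer S D t)^[N] f x ≤
      (b * K * ∑ k ∈ T, r k ^ t) * (transfer S D t)^[N] f x := by
    calc _ ≤ _ := hmain
      _ ≤ b * ∑ k ∈ T, K * r k ^ t * (transfer S D t)^[N] f x := by
        gcongr with k hk
        exact hterm k hk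
      _ = _ := by rw [← Finset.sum_mul, ← Finset.mul_sum]; ring
  have : 1 ≤ b * K * ∑ k ∈ T, r k ^ t := by
    by_contra! hlt
    nlinarith
  rw [inv_le_iff_one_le_mul₀ (by positivity)]
  linarith

/-- A positive superinvariant function of the transfer operator bounds the dimension below. -/
theorem le_dimH (h : ConformalSystem J S D m M c gap) (hne : J.Nonempty) (hJ : IsCompact J) {t : ℝ}
    (ht : 0 < t) {f : X → ℝ} {a b : ℝ} (ha : 0 < a) (hf : ∀ x ∈ J, a ≤ f x)
    (hfb : ∀ x ∈ J, f x ≤ b) (hL : ∀ x ∈ J, f x ≤ transfer S D t f x) :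
    ENNReal.ofReal t ≤ dimH J := by
  borelize X
  by_contra! hlt
  have hzero : Measure.hausdorffMeasure t J = 0 := by
    have := hausdorffMeasure_of_dimH_lt (d := t.toNNReal) (s := J) hlt
    rwa [Real.coe_toNNReal _ ht.le] at this
  obtain ⟨K, hK, hmain⟩ := h.exists_le_sum_rpow hne ht.le ha hf hfb hL
  have hg := h.gap_pos
  rw [Measure.hausdorffMeasure_apply] at hzero
  have hsup := (iSup₂_eq_bot.1 hzero) (ENNReal.ofReal (gap / 2)) (by simpa using hg)
  have hlt2 : (⨅ (U : ℕ → Set X) (_ : J ⊆ ⋃ n, U n)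
      (_ : ∀ n, Metric.ediam (U n) ≤ ENNReal.ofReal (gap / 2)),
        ∑' n, ⨆ _ : (U n).Nonempty, Metric.ediam (U n) ^ t) < ENNReal.ofReal (K / 2) := by
    rw [hsup]
    simpa using hK
  simp only [iInf_lt_iff] at hlt2
  obtain ⟨U, hU, hUd, hUs⟩ := hlt2
  obtain ⟨η, hη, hηs⟩ := ENNReal.exists_pos_sum_of_countable
    (ε := ENNReal.ofReal (K / 2)) (by simpa using hK) ℕ
  have htop : ∀ n, Metric.ediam (U n) ≠ ⊤ := fun n => ne_top_of_le_ne_top ENNReal.ofReal_ne_top (hUd n)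
  have hδ : ∀ n, ∃ δ > 0, Metric.diam (U n) + 2 * δ ≤ gap ∧
      (Metric.diam (U n) + 2 * δ) ^ t ≤ Metric.diam (U n) ^ t + η n := by
    intro n
    have hcont : ContinuousAt (fun δ : ℝ => (Metric.diam (U n) + 2 * δ) ^ t) 0 :=
      ContinuousAt.rpow_const (by fun_prop) (Or.inr ht.le)
    have hev : ∀ᶠ δ in nhds (0 : ℝ),
        (Metric.diam (U n) + 2 * δ) ^ t < Metric.diam (U n) ^ t + η n :=
      hcont.eventually_lt continuousAt_const (by simpa using hη n)
    obtain ⟨ε, hε, hball⟩ := Metric.eventually_nhds_iff.1 hev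
    have hd : Metric.diam (U n) ≤ gap / 2 :=
      ENNReal.toReal_le_of_le_ofReal (by positivity) (hUd n)
    refine ⟨min (ε / 2) (gap / 4), by positivity, ?_, ?_⟩
    · linarith [min_le_right (ε / 2) (gap / 4)]
    · refine (hball ?_).le
      rw [Real.dist_eq, sub_zero, abs_of_pos (by positivity)]
      exact (min_le_left _ _).trans_lt (by linarith)
  choose δ hδ0 hδg hδs using hδ
  obtain ⟨T, hT⟩ := hJ.elim_finite_subcover (fun n => Metric.thickening (δ n) (U n))
    (fun n => Metric.isOpen_thickening)
    (hU.trans (iUnion_mono fun n => Metric.self_subset_thickening (hδ0 n) _))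
  have hsum := hmain T (fun n => Metric.thickening (δ n) (U n))
    (fun n => Metric.diam (U n) + 2 * δ n)
    (fun n _ => by
      have := hδ0 n
      have := Metric.diam_nonneg (s := U n)
      positivity)
    (fun n _ => hδg n)
    (fun n _ x hx y hy => by
      obtain ⟨u, hu, hxu⟩ := Metric.mem_thickening_iff.1 hx
      obtain ⟨v, hv, hyv⟩ := Metric.mem_thickening_iff.1 hy
      have huv : dist u v ≤ Metric.diam (U n) :=
        Metric.dist_le_diam_of_mem (Metric.isBounded_iff_ediam_ne_top.2 (htop n)) hu hv
      have := dist_triangle4 x u v y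
      rw [dist_comm v y] at this
      linarith) hT
  have h1 : ∑ n ∈ T, Metric.diam (U n) ^ t < K / 2 := by
    rw [← ENNReal.ofReal_lt_ofReal_iff (by positivity), ENNReal.ofReal_sum_of_nonneg
      fun n _ => Real.rpow_nonneg Metric.diam_nonneg t]
    refine lt_of_le_of_lt ?_ hUs
    refine le_trans (Finset.sum_le_sum fun n _ => ?_) (ENNReal.sum_le_tsum T)
    rw [← ENNReal.ofReal_rpow_of_nonneg Metric.diam_nonneg ht.le, Metric.diam,
      ENNReal.ofReal_toReal (htop n)]
    rcases (U n).eq_empty_or_nonempty with he | hn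
    · simp [he, ENNReal.zero_rpow_of_pos ht]
    · exact le_iSup (fun _ : (U n).Nonempty => Metric.ediam (U n) ^ t) hn
  have h2 : ∑ n ∈ T, (η n : ℝ) < K / 2 := by
    rw [← ENNReal.ofReal_lt_ofReal_iff (by positivity),
      ENNReal.ofReal_sum_of_nonneg fun n _ => (η n).coe_nonneg]
    refine lt_of_le_of_lt ?_ hηs
    refine le_trans (Finset.sum_le_sum fun n _ => ?_) (ENNReal.sum_le_tsum T)
    simp
  have h3 : ∑ n ∈ T, (Metric.diam (U n) + 2 * δ n) ^ t ≤
      ∑ n ∈ T, Metric.diam (U n) ^ t + ∑ n ∈ T, (η n : ℝ) := by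
    rw [← Finset.sum_add_distrib]
    exact Finset.sum_le_sum fun n _ => hδs n
  linarith

end ConformalSystem

/-! Polynomials with integer coefficients as lists, lowest degree first. -/

namespace ZPoly

/-- Sum of polynomials. -/
def add : List ℤ → List ℤ → List ℤ
  | [], q => q
  | a :: p, [] => a :: p
  | a :: p, b :: q => (a + b) :: add p q

/-- Multiplication by a constant. -/
def smul (c : ℤ) : List ℤ → List ℤ
  | [] => []
  | a :: p => (c * a) :: smul c p

/-- Product of polynomials. -/
def mul : List ℤ → List ℤ → List ℤ
  | [], _ => []
  | a :: p, q => add (smul a q) (0 :: mul p q)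

/-- Composition of polynomials. -/
def comp : List ℤ → List ℤ → List ℤ
  | [], _ => []
  | a :: p, q => add [a] (mul q (comp p q))

/-- Derivative of a polynomial. -/
def deriv : List ℤ → List ℤ
  | [] => []
  | _ :: p => add p (0 :: deriv p)

/-- The polynomial `c ^ n * p (x / c)`, where `n` is the length of `p`. -/
def dilate (c : ℤ) : List ℤ → List ℤ
  | [] => []
  | a :: p => (a * c ^ (p.length + 1)) :: dilate c p

/-- Evaluation of a polynomial at a real point. -/
noncomputable def eval : List ℤ → ℝ → ℝ
  | [], _ => 0
  | a :: p, x => a + x * eval p x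

/-- The constant coefficient. -/
def const : List ℤ → ℤ
  | [] => 0
  | a :: _ => a

/-- An upper bound for the absolute value on `[-r, r]`. -/
def upper : List ℤ → ℤ → ℤ
  | [], _ => 0
  | a :: p, r => (a.natAbs : ℤ) + r * upper p r

/-- A lower bound for the value on `[-r, r]`. -/
def lower : List ℤ → ℤ → ℤ
  | [], _ => 0
  | a :: p, r => a - r * upper p r

lemma eval_add (p q : List ℤ) (x : ℝ) : eval (add p q) x = eval p x + eval q x := by
  induction p generalizing q with
  | nil => simp [add, eval]
  | cons a p ih =>
    cases q with
    | nil => simp [add, eval]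
    | cons b q => simp only [add, eval, ih]; push_cast; ring

lemma eval_smul (c : ℤ) (p : List ℤ) (x : ℝ) : eval (smul c p) x = c * eval p x := by
  induction p with
  | nil => simp [smul, eval]
  | cons a p ih => simp only [smul, eval, ih]; push_cast; ring

lemma eval_mul (p q : List ℤ) (x : ℝ) : eval (mul p q) x = eval p x * eval q x := by
  induction p with
  | nil => simp [mul, eval]
  | cons a p ih => simp only [mul, eval, eval_add, eval_smul, ih]; push_cast; ring

lemma eval_comp (p q : List ℤ) (x : ℝ) : eval (comp p q) x = eval p (eval q x) := by
  induction p with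
  | nil => simp [comp, eval]
  | cons a p ih => simp only [comp, eval, eval_add, eval_mul, ih]; ring

lemma eval_dilate {c : ℤ} (hc : c ≠ 0) (p : List ℤ) (x : ℝ) :
    eval (dilate c p) x = c ^ p.length * eval p (x / c) := by
  have hc' : (c : ℝ) ≠ 0 := by exact_mod_cast hc
  induction p with
  | nil => simp [dilate, eval]
  | cons a p ih =>
    simp only [dilate, eval, ih, List.length_cons]
    push_cast
    field_simp
    ring

lemma hasDerivAt_eval (p : List ℤ) (x : ℝ) : HasDerivAt (eval p) (eval (deriv p) x) x := by
  induction p with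
  | nil => exact hasDerivAt_const x 0
  | cons a p ih =>
    have h : HasDerivAt (fun y : ℝ => (a : ℝ) + y * eval p y) (1 * eval p x + x * eval (deriv p) x) x :=
      ((hasDerivAt_id x).mul ih).const_add _
    have e : eval (deriv (a :: p)) x = 1 * eval p x + x * eval (deriv p) x := by
      simp only [deriv, eval, eval_add]
      push_cast
      ring
    rw [e]
    exact h

lemma eval_zero (p : List ℤ) : eval p 0 = const p := by
  cases p <;> simp [eval, const]

lemma abs_eval_le (p : List ℤ) {r : ℤ} {x : ℝ} (hx : |x| ≤ r) : |eval p x| ≤ upper p r := by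
  induction p with
  | nil => simp [eval, upper]
  | cons a p ih =>
    simp only [eval, upper, Int.natCast_natAbs]
    push_cast
    calc |(a : ℝ) + x * eval p x| ≤ |(a : ℝ)| + |x| * |eval p x| := by
          rw [← abs_mul]
          exact abs_add_le _ _
      _ ≤ |(a : ℝ)| + r * upper p r := by
          have := (abs_nonneg x).trans hx
          gcongr

lemma lower_le_eval (p : List ℤ) {r : ℤ} {x : ℝ} (hx : |x| ≤ r) : (lower p r : ℝ) ≤ eval p x := by
  cases p with
  | nil => simp [eval, lower]
  | cons a p =>
    simp only [eval, lower]
    push_cast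
    have h0 := (abs_nonneg x).trans hx
    have h1 : |x * eval p x| ≤ r * upper p r := by
      rw [abs_mul]
      exact mul_le_mul hx (abs_eval_le p hx) (abs_nonneg _) h0
    linarith [neg_abs_le (x * eval p x)]

end ZPoly

/-- The Taylor polynomial of `exp` with `18` terms. -/
def expTaylor (x : ℚ) : ℚ := ∑ k ∈ Finset.range 18, x ^ k / (k.factorial : ℚ)

/-- A lower bound for `exp x`, for `0 ≤ x`. -/
def expLower (x : ℚ) : ℚ := expTaylor (x / 8) ^ 8

/-- An upper bound for `exp x`, for `0 ≤ x ≤ 8`. -/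
def expUpper (x : ℚ) : ℚ :=
  (expTaylor (x / 8) + (x / 8) ^ 18 * (18 + 1) / ((Nat.factorial 18 : ℚ) * 18)) ^ 8

lemma exp_eq_exp_div_eight_pow (x : ℝ) : Real.exp x = Real.exp (x / 8) ^ 8 := by
  rw [← Real.exp_nat_mul]
  congr 1
  push_cast
  ring

lemma expLower_le_exp {x : ℚ} (hx : 0 ≤ x) : (expLower x : ℝ) ≤ Real.exp x := by
  have hx' : (0 : ℝ) ≤ (x : ℝ) / 8 := by
    have : (0 : ℝ) ≤ x := by exact_mod_cast hx
    positivity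
  rw [exp_eq_exp_div_eight_pow, expLower, expTaylor]
  push_cast
  gcongr
  exact Real.sum_le_exp_of_nonneg hx' 18

lemma exp_le_expUpper {x : ℚ} (hx : 0 ≤ x) (hx8 : x ≤ 8) : Real.exp x ≤ expUpper x := by
  have hx' : (0 : ℝ) ≤ (x : ℝ) / 8 := by
    have : (0 : ℝ) ≤ x := by exact_mod_cast hx
    positivity
  have hx1 : (x : ℝ) / 8 ≤ 1 := by
    have : (x : ℝ) ≤ 8 := by exact_mod_cast hx8
    linarith
  rw [exp_eq_exp_div_eight_pow, expUpper, expTaylor]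
  push_cast
  gcongr
  have h := Real.exp_bound' hx' hx1 (n := 18) (by norm_num)
  push_cast at h
  exact h

/-- A certificate for `|log q - x| ≤ d`. -/
def logCheck (q x d : ℚ) : Bool :=
  decide (0 < q) && decide (0 ≤ x - d) && decide (0 ≤ x + d) && decide (x - d ≤ 8) &&
    decide (expUpper (x - d) ≤ q) && decide (q ≤ expLower (x + d))

lemma abs_log_sub_le_of_logCheck {q x d : ℚ} (h : logCheck q x d = true) :
    |Real.log q - x| ≤ d := by
  simp only [logCheck, Bool.and_eq_true, decide_eq_true_eq] at h
  obtain ⟨⟨⟨⟨⟨hq, hlo⟩, hhi⟩, h8⟩, hu⟩, hl⟩ := h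
  have hq' : (0 : ℝ) < q := by exact_mod_cast hq
  have h1 : ((x - d : ℚ) : ℝ) ≤ Real.log q := by
    rw [Real.le_log_iff_exp_le hq']
    exact (exp_le_expUpper hlo h8).trans (by exact_mod_cast hu)
  have h2 : Real.log q ≤ ((x + d : ℚ) : ℝ) := by
    rw [Real.log_le_iff_le_exp hq']
    exact le_trans (by exact_mod_cast hl) (expLower_le_exp hhi)
  push_cast at h1 h2
  rw [abs_le]
  constructor <;> linarith

/-- `n` times the numerator of the derivative of `log A + (k / n) * log Q - log B`. -/
def logDerivNum (A Q B : List ℤ) (k n : ℤ) : List ℤ :=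
  ZPoly.add
    (ZPoly.mul B
      (ZPoly.add (ZPoly.smul n (ZPoly.mul Q (ZPoly.deriv A)))
        (ZPoly.smul k (ZPoly.mul (ZPoly.deriv Q) A))))
    (ZPoly.smul (-n) (ZPoly.mul (ZPoly.deriv B) (ZPoly.mul Q A)))

/-- A certificate for the oscillation of `log A + (k / n) * log Q - log B` on `[-r, r]` to be at
most `e`. -/
def oscillationCheck (A Q B : List ℤ) (k n r : ℤ) (e : ℚ) : Bool :=
  decide (0 ≤ r) && decide (0 < ZPoly.lower A r) && decide (0 < ZPoly.lower Q r) &&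
    decide (0 < ZPoly.lower B r) &&
    decide (((ZPoly.upper (logDerivNum A Q B k n) r * r : ℤ) : ℚ) ≤
      e * (n * (ZPoly.lower A r * ZPoly.lower Q r * ZPoly.lower B r) : ℤ))

lemma abs_log_ratio_sub_le_of_oscillationCheck {A Q B : List ℤ} {k n r : ℤ} {e : ℚ}
    (h : oscillationCheck A Q B k n r e = true) (hn : 0 < n) {v : ℝ} (hv : |v| ≤ r) :
    0 < ZPoly.eval A v ∧ 0 < ZPoly.eval Q v ∧ 0 < ZPoly.eval B v ∧
      |(Real.log (ZPoly.eval A v) + k / n * Real.log (ZPoly.eval Q v) -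
          Real.log (ZPoly.eval B v)) -
        (Real.log (ZPoly.const A) + k / n * Real.log (ZPoly.const Q) -
          Real.log (ZPoly.const B))| ≤ e := by
  simp only [oscillationCheck, Bool.and_eq_true, decide_eq_true_eq] at h
  obtain ⟨⟨⟨⟨hr, hA⟩, hQ⟩, hB⟩, hN⟩ := h
  have hn' : (0 : ℝ) < n := by exact_mod_cast hn
  have hr' : (0 : ℝ) ≤ r := by exact_mod_cast hr
  have hA' : (0 : ℝ) < ZPoly.lower A r := by exact_mod_cast hA
  have hQ' : (0 : ℝ) < ZPoly.lower Q r := by exact_mod_cast hQ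
  have hB' : (0 : ℝ) < ZPoly.lower B r := by exact_mod_cast hB
  have pA : ∀ u : ℝ, |u| ≤ r → 0 < ZPoly.eval A u := fun u hu =>
    hA'.trans_le (ZPoly.lower_le_eval A hu)
  have pQ : ∀ u : ℝ, |u| ≤ r → 0 < ZPoly.eval Q u := fun u hu =>
    hQ'.trans_le (ZPoly.lower_le_eval Q hu)
  have pB : ∀ u : ℝ, |u| ≤ r → 0 < ZPoly.eval B u := fun u hu =>
    hB'.trans_le (ZPoly.lower_le_eval B hu)
  refine ⟨pA v hv, pQ v hv, pB v hv, ?_⟩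
  set F : ℝ → ℝ := fun u =>
    Real.log (ZPoly.eval A u) + k / n * Real.log (ZPoly.eval Q u) - Real.log (ZPoly.eval B u) with hF
  have hz : |(0 : ℝ)| ≤ r := by simpa using hr'
  set L : ℝ := n * (ZPoly.lower A r * ZPoly.lower Q r * ZPoly.lower B r) with hL
  have hLpos : 0 < L := by positivity
  have hderiv : ∀ u ∈ Icc (-(r : ℝ)) r, HasDerivWithinAt F
      (ZPoly.eval (logDerivNum A Q B k n) u /
        (n * (ZPoly.eval A u * ZPoly.eval Q u * ZPoly.eval B u))) (Icc (-(r : ℝ)) r) u := by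
    intro u hu
    have hu' : |u| ≤ r := abs_le.2 hu
    have a1 := (pA u hu').ne'
    have a2 := (pQ u hu').ne'
    have a3 := (pB u hu').ne'
    have hd := (((ZPoly.hasDerivAt_eval A u).log a1).add
      (((ZPoly.hasDerivAt_eval Q u).log a2).const_mul (k / n : ℝ))).sub
      ((ZPoly.hasDerivAt_eval B u).log a3)
    refine (hd.congr_deriv ?_).hasDerivWithinAt
    simp only [logDerivNum, ZPoly.eval_add, ZPoly.eval_smul, ZPoly.eval_mul]
    push_cast
    field_simp
    ring
  have hbound : ∀ u ∈ Icc (-(r : ℝ)) r, ‖ZPoly.eval (logDerivNum A Q B k n) u /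
        (n * (ZPoly.eval A u * ZPoly.eval Q u * ZPoly.eval B u))‖ ≤
        ZPoly.upper (logDerivNum A Q B k n) r / L := by
    intro u hu
    have hu' : |u| ≤ r := abs_le.2 hu
    have b1 := ZPoly.lower_le_eval A hu'
    have b2 := ZPoly.lower_le_eval Q hu'
    have b3 := ZPoly.lower_le_eval B hu'
    have hle : L ≤ n * (ZPoly.eval A u * ZPoly.eval Q u * ZPoly.eval B u) := by
      have := pA u hu'
      have := pQ u hu'
      rw [hL]
      gcongr
    have hup := ZPoly.abs_eval_le (logDerivNum A Q B k n) hu'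
    rw [Real.norm_eq_abs, abs_div, abs_of_pos (hLpos.trans_le hle)]
    exact div_le_div₀ ((abs_nonneg _).trans hup) hup hLpos hle
  have hmv := (convex_Icc (-(r : ℝ)) r).norm_image_sub_le_of_norm_hasDerivWithin_le hderiv hbound
    (abs_le.1 hz) (abs_le.1 hv)
  have hN' : (ZPoly.upper (logDerivNum A Q B k n) r : ℝ) * r ≤ e * L := by
    rw [hL]
    exact_mod_cast hN
  have hup0 : (0 : ℝ) ≤ ZPoly.upper (logDerivNum A Q B k n) r :=
    (abs_nonneg _).trans (ZPoly.abs_eval_le (logDerivNum A Q B k n) hz)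
  rw [sub_zero, Real.norm_eq_abs, Real.norm_eq_abs] at hmv
  simp only [hF, ZPoly.eval_zero] at hmv
  refine hmv.trans ?_
  rw [div_mul_eq_mul_div, div_le_iff₀ hLpos]
  exact le_trans (by gcongr) hN'

/-- A certificate for `(A / a) * (Q / q) ^ (k / n) / B` being close to `1` on `[-r, r]`: here `x`
approximates `log (Q / q)` at the origin. -/
def ratioCheck (A Q B : List ℤ) (k n r : ℤ) (a q e d x : ℚ) : Bool :=
  oscillationCheck A Q B k n r e && logCheck (ZPoly.const Q / q) x d &&
    logCheck (ZPoly.const B / (ZPoly.const A / a)) (k / n * x) d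

lemma abs_log_ratio_le_of_ratioCheck {A Q B : List ℤ} {k n r : ℤ} {a q e d x : ℚ}
    (h : ratioCheck A Q B k n r a q e d x = true) (hk : 0 ≤ k) (hkn : k ≤ n) (hn : 0 < n)
    (ha : 0 < a) (hq : 0 < q) {v : ℝ} (hv : |v| ≤ r) :
    0 < ZPoly.eval A v ∧ 0 < ZPoly.eval Q v ∧ 0 < ZPoly.eval B v ∧
      |Real.log (ZPoly.eval A v / a) + k / n * Real.log (ZPoly.eval Q v / q) -
        Real.log (ZPoly.eval B v)| ≤ e + 2 * d := by
  simp only [ratioCheck, Bool.and_eq_true] at h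
  obtain ⟨⟨hosc, hlQ⟩, hlB⟩ := h
  obtain ⟨pA, pQ, pB, hstep⟩ := abs_log_ratio_sub_le_of_oscillationCheck hosc hn hv
  refine ⟨pA, pQ, pB, ?_⟩
  have hz : |(0 : ℝ)| ≤ r := by
    rw [abs_zero]
    exact (abs_nonneg v).trans hv
  obtain ⟨cA, cQ, cB, -⟩ := abs_log_ratio_sub_le_of_oscillationCheck hosc hn hz
  rw [ZPoly.eval_zero] at cA cQ cB
  have ha' : (0 : ℝ) < a := by exact_mod_cast ha
  have hq' : (0 : ℝ) < q := by exact_mod_cast hq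
  have hQ0 := abs_log_sub_le_of_logCheck hlQ
  have hB0 := abs_log_sub_le_of_logCheck hlB
  push_cast at hQ0 hB0
  rw [Real.log_div cB.ne' (by positivity), Real.log_div cA.ne' ha'.ne'] at hB0
  rw [Real.log_div cQ.ne' hq'.ne'] at hQ0
  rw [Real.log_div pA.ne' ha'.ne', Real.log_div pQ.ne' hq'.ne']
  have hs0 : (0 : ℝ) ≤ k / n := by
    have : (0 : ℝ) ≤ k := by exact_mod_cast hk
    have : (0 : ℝ) < n := by exact_mod_cast hn
    positivity
  have hs1 : (k / n : ℝ) ≤ 1 := by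
    have : (0 : ℝ) < n := by exact_mod_cast hn
    rw [div_le_one this]
    exact_mod_cast hkn
  have hQ1 : |(k / n : ℝ) * (Real.log (ZPoly.const Q) - Real.log q - x)| ≤ 1 * d := by
    rw [abs_mul, abs_of_nonneg hs0]
    exact mul_le_mul hs1 hQ0 (abs_nonneg _) zero_le_one
  rw [abs_le] at hstep hB0 hQ1 ⊢
  constructor <;> linarith [hstep.1, hstep.2, hB0.1, hB0.2, hQ1.1, hQ1.2]

namespace Vicsek

/-- Coefficients, up to a common factor, of polynomials in `x - center j` which
approximate the contribution of the branch `i` to the eigenfunction of the transfer operator on the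
piece `j`. -/
def coeff : Fin 3 → Fin 3 → List ℤ :=
  ![![
      [266372125886636453, -55160968616173718, 26484495989002137, -14997019630054083,
       9191902216660264, -5894349515910197, 3892007705307037, -2623032192512554, 1794743553452948,
       -1242370208429641, 867964967741457, -610946859962327, 432705807251722, -308072068928559,
       221277374813437, -158674611871973],
      [291477141934285601, -83672489452676927, 55465237885376638, -43599721302218877,
       37123397731887094, -33081679494127115, 30359927524806721, -28440662634766767,
       27049912331723053, -26028686306945685, 25278305616960709, -24734090155592649,
       24344504342461079, -24097064361389908, 24635494735563964, -24458710087271813],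
      [347657899054110747, -188861673801964571, 237370546524548068, -356393709225998055,
       580250916633371170, -989132297997750658, 1736746678797952604, -3112967651983194305,
       5665170965049761446, -10430780780325801721, 19383435072542956038, -36290833739022223015,
       68356634450221121318, -129463141386131189218, 251400230541773127099, -477427184072953641302]],
    ![
      [403009894018988195, 58950972547270148, 117465876894818502, 85952322982733320,
       120740637981425768, 127475713869450665, 164918219045007439, 197353120922874762,
       252606959655829134, 317551014537150322, 409163216893409550, 526383451383578174,
       684401809452163120, 892039437470113447, 1186727521218325694, 1563618180011414458],
      [394610728558094267, -9943623202245808, 85711744580492786, -13820449056037023,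
       53111409900012448, -15565555499220942, 40244572291289782, -16726194935121273,
       33564269096745826, -17646145839753950, 29697778210234472, -18465120241987973,
       27369028736020125, -19252124559645245, 26727542008327531, -20512432822717738],
      [421153137875224995, -126955132875585412, 232476999953436989, -321747015830168798,
       547193507672647931, -929684510030364384, 1646646514731901070, -2960375270407897438,
       5407182535710767852, -9981799376941342506, 18592462544845523495, -34878271742944448438,
       65809091379244722415, -124826857663187315269, 242735262158764650512, -461523766847400109051]],
    ![
      [324461259427651447, 118520734979884110, 103754934843496619, 107360762579132111,
       120352184295650248, 141192737581693367, 170576859882473840, 210345300365433646,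
       263339133388195887, 333536996602235579, 426353232636605384, 549084085186721132,
       711468422721893086, 926737768522705965, 1230529995660467813, 1619768264155500836],
      [290882002424616057, 69971033866615939, 40932311632031058, 28023843912513916,
       20774299132548810, 16110095189280574, 12863108260727019, 10482423457142447,
       8672165610707962, 7258190394001944, 6130839569482095, 5217370013509540, 4466708589811705,
       3844336253595374, 3395274703502708, 2960853207517540],
      [265583739882322953, 44739897457190344, 18756621873797982, 9084041104509697,
       4763517067277589, 2611701232243755, 1474035384622938, 849007106004695, 496405563190214,
       293615964073959, 175267837902599, 105404174761093, 63780943333855, 38795232138141,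
       23752804137829, 14594205268422]]]

/-- The centers of the three pieces containing the Julia set, in units of `10 ^ (-5)`. -/
def center : Fin 3 → ℤ := ![-4600, -41700, -87100]

/-- The radii of the three pieces containing the Julia set, in units of `10 ^ (-5)`. -/
def radius : Fin 3 → ℤ := ![4600, 8400, 3800]

/-- The sign of the derivative of `RV` on the three pieces. -/
def orientation : Fin 3 → ℤ := ![1, -1, 1]

/-- The center of the set of points of the piece `i` mapped to the piece `j`, in units of
`10 ^ (-5)`. -/
def subcenter : Fin 3 → Fin 3 → ℤ :=
  ![![-313, -3093, -7519],
    ![-49244, -43314, -35772],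
    ![-83777, -86926, -90042]]

/-- The radius of the set of points of the piece `i` mapped to the piece `j`, in units of
`10 ^ (-5)`. -/
def subradius : Fin 3 → Fin 3 → ℤ :=
  ![![314, 693, 454],
    ![757, 1331, 689],
    ![444, 639, 236]]

/-- Approximations of the logarithm of the derivative of `RV` at the points `subcenter i j`, in
units of `10 ^ (-20)`. -/
def logRate : Fin 3 → Fin 3 → ℤ :=
  ![![268788681717478128502, 249601471031248265781, 212731961130318730154],
    ![180575234589189640322, 184364514896075514514, 170856830823959819531],
    ![233938035492484126562, 257697205135225314240, 278014429755743149323]]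

/-- An approximation of the dimension of the Julia set, in units of `10 ^ (-18)`. -/
def exponent : ℤ := 491954570052666344

/-- The contribution of the branch `i` to the eigenfunction on the piece `j`, in the variable
`10 ^ 5 * x - center j`. -/
def branchPoly (i j : Fin 3) : List ℤ := ZPoly.dilate (10 ^ 5) (coeff i j)

/-- The eigenfunction on the piece `j`, in the variable `10 ^ 5 * x - center j`. -/
def eigenPoly (j : Fin 3) : List ℤ :=
  ZPoly.add (ZPoly.add (branchPoly 0 j) (branchPoly 1 j)) (branchPoly 2 j)

/-- The polynomial `10 ^ 10 * (10 ^ 5 * RV x - b)` in the variable `10 ^ 5 * x - a`. -/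
def mapPoly (a b : ℤ) : List ℤ :=
  [36 * a ^ 3 + 48 * 10 ^ 5 * a ^ 2 + 15 * 10 ^ 10 * a - 10 ^ 10 * b,
    108 * a ^ 2 + 96 * 10 ^ 5 * a + 15 * 10 ^ 10, 108 * a + 48 * 10 ^ 5, 36]

/-- The derivative of `RV`, multiplied by `10 ^ 10`, in the variable `10 ^ 5 * x - a`. -/
def ratePoly (a : ℤ) : List ℤ :=
  [108 * a ^ 2 + 96 * 10 ^ 5 * a + 15 * 10 ^ 10, 216 * a + 96 * 10 ^ 5, 108]

/-- The polynomials `branchPoly` solve the eigenvalue equation up to a small error. -/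
def branchCheck (i j : Fin 3) : Bool :=
  ratioCheck
    (ZPoly.comp (ZPoly.dilate (10 ^ 10) (branchPoly i j)) (mapPoly (subcenter i j) (center j)))
    (ZPoly.smul (orientation i) (ratePoly (subcenter i j)))
    (ZPoly.comp (eigenPoly i) [subcenter i j - center i, 1])
    exponent (10 ^ 18) (subradius i j) (10 ^ 160) (10 ^ 10) (1 / 10 ^ 15) (1 / 10 ^ 16)
    (logRate i j / 10 ^ 20)

lemma branchCheck_eq_true (i j : Fin 3) : branchCheck i j = true := by
  match i, j with
  | 0, 0 => decide +kernel
  | 0, 1 => decide +kernel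
  | 0, 2 => decide +kernel
  | 1, 0 => decide +kernel
  | 1, 1 => decide +kernel
  | 1, 2 => decide +kernel
  | 2, 0 => decide +kernel
  | 2, 1 => decide +kernel
  | 2, 2 => decide +kernel

/-- The intervals containing the three parts of the Julia set. -/
def piece (i : Fin 3) : Set ℝ := {y : ℝ | |10 ^ 5 * y - (center i : ℝ)| ≤ (radius i : ℝ)}

/-- The slope of the chord of `RV` over the interval with endpoints `a` and `b`. -/
def chord (a b : ℝ) : ℝ := 36 * (a ^ 2 + a * b + b ^ 2) + 48 * (a + b) + 15

/-- The inverse branches of `RV`. -/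
noncomputable def branch (i : Fin 3) : ℝ → ℝ := Function.invFunOn RV (piece i)

lemma mem_piece_zero {y : ℝ} : y ∈ piece 0 ↔ -0.092 ≤ y ∧ y ≤ 0 := by
  simp only [piece, center, radius, mem_ofPred_eq, abs_le, Matrix.cons_val]
  push_cast
  constructor <;> rintro ⟨h₁, h₂⟩ <;> constructor <;> linarith

lemma mem_piece_one {y : ℝ} : y ∈ piece 1 ↔ -0.501 ≤ y ∧ y ≤ -0.333 := by
  simp only [piece, center, radius, mem_ofPred_eq, abs_le, Matrix.cons_val]
  push_cast
  constructor <;> rintro ⟨h₁, h₂⟩ <;> constructor <;> linarith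

lemma mem_piece_two {y : ℝ} : y ∈ piece 2 ↔ -0.909 ≤ y ∧ y ≤ -0.833 := by
  simp only [piece, center, radius, mem_ofPred_eq, abs_le, Matrix.cons_val]
  push_cast
  constructor <;> rintro ⟨h₁, h₂⟩ <;> constructor <;> linarith

lemma piece_subset (i : Fin 3) : piece i ⊆ Icc (-1) 0 := by
  intro y hy
  rw [mem_Icc]
  match i with
  | 0 => rw [mem_piece_zero] at hy; constructor <;> linarith
  | 1 => rw [mem_piece_one] at hy; constructor <;> linarith
  | 2 => rw [mem_piece_two] at hy; constructor <;> linarith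

lemma exists_mem_piece {y : ℝ} (hy : y ∈ Icc (-1) 0) (hRy : RV y ∈ Icc (-1) 0) :
    ∃ i, y ∈ piece i := by
  obtain ⟨h₁, h₂⟩ := hy
  obtain ⟨h₃, h₄⟩ := hRy
  have e : RV y + 1 = (3 * y + 1) * (12 * y ^ 2 + 12 * y + 1) := by unfold RV; ring
  unfold RV at h₄
  rcases lt_or_ge y (-0.909) with h | h
  · have h5 : 0 < 12 * y ^ 2 + 12 * y + 1 := by nlinarith
    nlinarith [mul_neg_of_neg_of_pos (by linarith : 3 * y + 1 < 0) h5]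
  rcases le_or_gt y (-0.833) with h' | h'
  · exact ⟨2, mem_piece_two.2 ⟨h, h'⟩⟩
  rcases lt_or_ge y (-0.501) with h | h
  · nlinarith [mul_pos_of_neg_of_neg (by linarith : y < 0) (by linarith : 6 * y + 3 < 0)]
  rcases le_or_gt y (-0.333) with h' | h'
  · exact ⟨1, mem_piece_one.2 ⟨h, h'⟩⟩
  rcases lt_or_ge y (-0.092) with h | h
  · have h5 : 12 * y ^ 2 + 12 * y + 1 < 0 := by nlinarith
    nlinarith [mul_neg_of_pos_of_neg (by linarith : 0 < 3 * y + 1) h5]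
  · exact ⟨0, mem_piece_zero.2 ⟨h, h₂⟩⟩

lemma continuous_RV : Continuous RV := by unfold RV; fun_prop

lemma exists_mem_piece_RV_eq (i : Fin 3) {x : ℝ} (hx : x ∈ Icc (-1) 0) :
    ∃ y ∈ piece i, RV y = x := by
  obtain ⟨h₁, h₂⟩ := hx
  match i with
  | 0 =>
    obtain ⟨y, hy, h⟩ := intermediate_value_Icc (by norm_num : (-0.092 : ℝ) ≤ 0)
      continuous_RV.continuousOn
      (show x ∈ Icc _ _ by constructor <;> norm_num [RV] <;> linarith)
    exact ⟨y, mem_piece_zero.2 hy, h⟩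
  | 1 =>
    obtain ⟨y, hy, h⟩ := intermediate_value_Icc' (by norm_num : (-0.501 : ℝ) ≤ -0.333)
      continuous_RV.continuousOn
      (show x ∈ Icc _ _ by constructor <;> norm_num [RV] <;> linarith)
    exact ⟨y, mem_piece_one.2 hy, h⟩
  | 2 =>
    obtain ⟨y, hy, h⟩ := intermediate_value_Icc (by norm_num : (-0.909 : ℝ) ≤ -0.833)
      continuous_RV.continuousOn
      (show x ∈ Icc _ _ by constructor <;> norm_num [RV] <;> linarith)
    exact ⟨y, mem_piece_two.2 hy, h⟩

lemma branch_mem (i : Fin 3) {x : ℝ} (hx : x ∈ Icc (-1) 0) : branch i x ∈ piece i :=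
  Function.invFunOn_mem (exists_mem_piece_RV_eq i hx)

lemma RV_branch (i : Fin 3) {x : ℝ} (hx : x ∈ Icc (-1) 0) : RV (branch i x) = x :=
  Function.invFunOn_eq (exists_mem_piece_RV_eq i hx)

lemma RV_sub_RV (a b : ℝ) : RV a - RV b = chord a b * (a - b) := by
  unfold RV chord
  ring

lemma four_le_orientation_mul_chord {i : Fin 3} {a b : ℝ} (ha : a ∈ piece i)
    (hb : b ∈ piece i) : 4 ≤ orientation i * chord a b := by
  have e : chord a b =
      ((108 * a ^ 2 + 96 * a + 15) + (108 * b ^ 2 + 96 * b + 15)) / 2 - 18 * (a - b) ^ 2 := by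
    unfold chord
    ring
  rw [e]
  match i with
  | 0 =>
    rw [mem_piece_zero] at ha hb
    have : (a - b) ^ 2 ≤ 0.1 ^ 2 := by
      rw [sq_le_sq, abs_le, abs_of_pos (by norm_num : (0 : ℝ) < 0.1)]
      constructor <;> linarith
    simp only [orientation, Matrix.cons_val]
    push_cast
    nlinarith
  | 1 =>
    rw [mem_piece_one] at ha hb
    simp only [orientation, Matrix.cons_val]
    push_cast
    nlinarith [mul_nonneg (sub_nonneg.2 ha.1) (sub_nonneg.2 ha.2),
      mul_nonneg (sub_nonneg.2 hb.1) (sub_nonneg.2 hb.2), sq_nonneg (a - b)]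
  | 2 =>
    rw [mem_piece_two] at ha hb
    have : (a - b) ^ 2 ≤ 0.1 ^ 2 := by
      rw [sq_le_sq, abs_le, abs_of_pos (by norm_num : (0 : ℝ) < 0.1)]
      constructor <;> linarith
    simp only [orientation, Matrix.cons_val]
    push_cast
    nlinarith [sq_nonneg (a + 5 / 6), sq_nonneg (b + 5 / 6)]

lemma abs_orientation (i : Fin 3) : |(orientation i : ℝ)| = 1 := by
  fin_cases i <;> simp [orientation]

lemma abs_chord_eq {i : Fin 3} {a b : ℝ} (ha : a ∈ piece i) (hb : b ∈ piece i) :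
    |chord a b| = orientation i * chord a b := by
  rw [← one_mul |chord a b|, ← abs_orientation i, ← abs_mul]
  exact abs_of_nonneg (by linarith [four_le_orientation_mul_chord ha hb])

lemma four_le_abs_chord {i : Fin 3} {a b : ℝ} (ha : a ∈ piece i) (hb : b ∈ piece i) :
    4 ≤ |chord a b| :=
  (four_le_orientation_mul_chord ha hb).trans_eq (abs_chord_eq ha hb).symm

lemma injOn_RV (i : Fin 3) : InjOn RV (piece i) := by
  intro a ha b hb h
  have h' := RV_sub_RV a b
  have h4 := four_le_abs_chord ha hb
  rw [h, sub_self, eq_comm, mul_eq_zero] at h'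
  rcases h' with h' | h'
  · rw [h', abs_zero] at h4
    linarith
  · linarith

lemma orientation_mul_RV_le {i : Fin 3} {a b : ℝ} (ha : a ∈ piece i) (hb : b ∈ piece i)
    (hab : a ≤ b) : orientation i * RV a + 4 * (b - a) ≤ orientation i * RV b := by
  have h := four_le_orientation_mul_chord hb ha
  have e : orientation i * RV b - orientation i * RV a =
      orientation i * chord b a * (b - a) := by
    rw [← mul_sub, RV_sub_RV, mul_assoc]
  nlinarith

lemma abs_chord_sub_le {a a' b r : ℝ} (ha : a ∈ Icc (-1) 0) (ha' : a' ∈ Icc (-1) 0)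
    (hb : b ∈ Icc (-1) 0) (h : |a - b| ≤ r) (h' : |a' - b| ≤ r) :
    |chord a a' - chord b b| ≤ 400 * r := by
  have e : chord a a' - chord b b =
      (36 * (a + b + a') + 48) * (a - b) + (36 * (a' + b + b) + 48) * (a' - b) := by
    unfold chord
    ring
  obtain ⟨a1, a2⟩ := ha
  obtain ⟨a1', a2'⟩ := ha'
  obtain ⟨b1, b2⟩ := hb
  have c1 : |36 * (a + b + a') + 48| ≤ 200 := by rw [abs_le]; constructor <;> linarith
  have c2 : |36 * (a' + b + b) + 48| ≤ 200 := by rw [abs_le]; constructor <;> linarith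
  have d1 := mul_le_mul c1 h (abs_nonneg _) (by norm_num)
  have d2 := mul_le_mul c2 h' (abs_nonneg _) (by norm_num)
  rw [← abs_mul] at d1 d2
  rw [e]
  exact (abs_add_le _ _).trans (by linarith)

lemma conformalSystem {J : Set ℝ} (hsub : J ⊆ Icc (-1) 0) (heq : J = RV ⁻¹' J ∩ Icc (-1) 0) :
    ConformalSystem J branch (fun y => |chord y y|) 4 219 100 0.2 := by
  have hmem : ∀ y ∈ J, ∃ i, y ∈ piece i := by
    intro y hy
    exact exists_mem_piece (hsub hy) (hsub (heq.subset hy).1)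
  have hmap : ∀ i, ∀ x ∈ J, branch i x ∈ J := by
    intro i x hx
    rw [heq]
    refine ⟨?_, piece_subset i (branch_mem i (hsub hx))⟩
    rw [mem_preimage, RV_branch i (hsub hx)]
    exact hx
  have hdist : ∀ i, ∀ x ∈ J, ∀ x' ∈ J, dist x x' =
      |chord (branch i x) (branch i x')| * dist (branch i x) (branch i x') := by
    intro i x hx x' hx'
    rw [Real.dist_eq, Real.dist_eq, ← abs_mul, ← RV_sub_RV, RV_branch i (hsub hx),
      RV_branch i (hsub hx')]
  have hchord : ∀ i, ∀ x ∈ J, ∀ x' ∈ J, 4 ≤ |chord (branch i x) (branch i x')| :=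
    fun i x hx x' hx' => four_le_abs_chord (branch_mem i (hsub hx)) (branch_mem i (hsub hx'))
  have hdistort : ∀ i, ∀ x ∈ J, ∀ x' ∈ J, ∀ y ∈ J, ∀ r, dist (branch i x) (branch i y) ≤ r →
      dist (branch i x') (branch i y) ≤ r →
      0 ≤ r ∧ |chord (branch i x) (branch i x') - chord (branch i y) (branch i y)| ≤ 400 * r := by
    intro i x hx x' hx' y hy r h h'
    exact ⟨dist_nonneg.trans h, abs_chord_sub_le (hsub (hmap i x hx)) (hsub (hmap i x' hx'))
      (hsub (hmap i y hy)) h h'⟩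
  refine ⟨by norm_num, by norm_num, by norm_num, hmap, ?_, ?_, ?_, ?_, ?_, ?_, ?_, ?_⟩
  · intro y hy
    obtain ⟨i, hi⟩ := hmem y hy
    have hR := (heq.subset hy).1
    exact ⟨i, RV y, hR, injOn_RV i (branch_mem i (hsub hR)) hi (RV_branch i (hsub hR))⟩
  · intro y hy
    obtain ⟨i, hi⟩ := hmem y hy
    exact four_le_abs_chord hi hi
  · intro y hy
    obtain ⟨h1, h2⟩ := hsub hy
    unfold chord
    rw [abs_le]
    constructor <;> nlinarith
  · intro i x hx x' hx'
    rw [hdist i x hx x' hx']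
    exact mul_le_mul_of_nonneg_right (hchord i x hx x' hx') dist_nonneg
  · intro i x hx x' hx' y hy r h h'
    obtain ⟨hr, hd⟩ := hdistort i x hx x' hx' y hy r h h'
    have h4 := hchord i y hy y hy
    rw [hdist i x hx x' hx']
    refine mul_le_mul_of_nonneg_right ?_ dist_nonneg
    nlinarith [abs_sub_abs_le_abs_sub (chord (branch i x) (branch i x'))
      (chord (branch i y) (branch i y))]
  · intro i x hx x' hx' y hy r h h'
    obtain ⟨hr, hd⟩ := hdistort i x hx x' hx' y hy r h h'
    have h4 := hchord i x hx x' hx'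
    rw [hdist i x hx x' hx', ← mul_assoc]
    refine mul_le_mul_of_nonneg_right ?_ dist_nonneg
    rw [abs_sub_comm] at hd
    nlinarith [abs_sub_abs_le_abs_sub (chord (branch i y) (branch i y))
      (chord (branch i x) (branch i x'))]
  · intro i x hx y hy r h
    obtain ⟨hr, hd⟩ := hdistort i x hx x hx y hy r h h
    have h4 := hchord i x hx x hx
    rw [abs_sub_comm] at hd
    nlinarith [abs_sub_abs_le_abs_sub (chord (branch i y) (branch i y))
      (chord (branch i x) (branch i x))]
  · intro i k hik x hx x' hx'
    have hi := branch_mem i (hsub hx)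
    have hk := branch_mem k (hsub hx')
    generalize branch i x = y at hi
    generalize branch k x' = z at hk
    rw [Real.dist_eq, le_abs]
    fin_cases i <;> fin_cases k <;>
      simp only [Fin.zero_eta, Fin.mk_one, Fin.reduceFinMk, mem_piece_zero, mem_piece_one,
        mem_piece_two, ne_eq, not_true_eq_false] at hi hk hik <;>
      first
        | (left; linarith)
        | (right; linarith)

/-- Integer inequalities locating the points of the piece `i` mapped to the piece `j`. -/
lemma subpiece_bounds (i j : Fin 3) :
    (center i - radius i ≤ subcenter i j - subradius i j ∧
      subcenter i j - subradius i j ≤ center i + radius i ∧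
      orientation i * ZPoly.const (mapPoly (subcenter i j - subradius i j) (center j)) ≤
        -(10 ^ 10 * radius j)) ∧
    (center i + radius i ≤ subcenter i j + subradius i j ∨
      center i - radius i ≤ subcenter i j + subradius i j ∧
      subcenter i j + subradius i j ≤ center i + radius i ∧
      10 ^ 10 * radius j ≤
        orientation i * ZPoly.const (mapPoly (subcenter i j + subradius i j) (center j))) := by
  revert i j
  decide +kernel

lemma eval_mapPoly (a b : ℤ) (y : ℝ) :
    ZPoly.eval (mapPoly a b) (10 ^ 5 * y - a) = 10 ^ 10 * (10 ^ 5 * RV y - b) := by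
  simp only [mapPoly, ZPoly.eval, RV]
  push_cast
  ring

lemma eval_ratePoly (a : ℤ) (y : ℝ) :
    ZPoly.eval (ratePoly a) (10 ^ 5 * y - a) = 10 ^ 10 * chord y y := by
  simp only [ratePoly, ZPoly.eval, chord]
  push_cast
  ring

lemma const_mapPoly (a b : ℤ) :
    (ZPoly.const (mapPoly a b) : ℝ) = 10 ^ 10 * (10 ^ 5 * RV (a / 10 ^ 5) - b) := by
  rw [← eval_mapPoly, mul_div_cancel₀ _ (by norm_num), sub_self, ZPoly.eval_zero]

lemma div_mem_piece {i : Fin 3} {a : ℤ} (h₁ : center i - radius i ≤ a)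
    (h₂ : a ≤ center i + radius i) : (a / 10 ^ 5 : ℝ) ∈ piece i := by
  have h₁' : (center i : ℝ) - radius i ≤ a := by exact_mod_cast h₁
  have h₂' : (a : ℝ) ≤ center i + radius i := by exact_mod_cast h₂
  simp only [piece, mem_ofPred_eq]
  rw [mul_div_cancel₀ _ (by norm_num), abs_le]
  constructor <;> linarith

lemma abs_sub_subcenter_le {i j : Fin 3} {y : ℝ} (hy : y ∈ piece i) (hRy : RV y ∈ piece j) :
    |10 ^ 5 * y - (subcenter i j : ℝ)| ≤ (subradius i j : ℝ) := by
  obtain ⟨⟨h1, h2, h3⟩, h4⟩ := subpiece_bounds i j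
  have hR : |10 ^ 5 * (orientation i * RV y) - orientation i * (center j : ℝ)| ≤ (radius j : ℝ) := by
    have e : 10 ^ 5 * (orientation i * RV y) - orientation i * (center j : ℝ) =
        orientation i * (10 ^ 5 * RV y - center j) := by ring
    rw [e, abs_mul, abs_orientation, one_mul]
    exact hRy
  have hy' := hy
  simp only [piece, mem_ofPred_eq] at hy'
  rw [abs_le] at hR hy' ⊢
  constructor
  · by_contra! hlt
    have hlt' : y < ((subcenter i j - subradius i j : ℤ) : ℝ) / 10 ^ 5 := by
      rw [lt_div_iff₀ (by norm_num)]
      push_cast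
      linarith
    have hmono := orientation_mul_RV_le hy (div_mem_piece h1 h2) hlt'.le
    have h3' : (orientation i : ℝ) *
        (ZPoly.const (mapPoly (subcenter i j - subradius i j) (center j)) : ℝ) ≤
          -(10 ^ 10 * radius j) := by exact_mod_cast h3
    rw [const_mapPoly] at h3'
    linarith [hR.1]
  · by_contra! hlt
    have hlt' : ((subcenter i j + subradius i j : ℤ) : ℝ) / 10 ^ 5 < y := by
      rw [div_lt_iff₀ (by norm_num)]
      push_cast
      linarith
    rcases h4 with h4 | ⟨h4, h5, h6⟩
    · have h4' : (center i : ℝ) + radius i ≤ subcenter i j + subradius i j := by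
        exact_mod_cast h4
      linarith [hy'.2]
    · have hmono := orientation_mul_RV_le (div_mem_piece h4 h5) hy hlt'.le
      have h6' : (10 ^ 10 * radius j : ℝ) ≤ (orientation i : ℝ) *
          (ZPoly.const (mapPoly (subcenter i j + subradius i j) (center j)) : ℝ) := by
        exact_mod_cast h6
      rw [const_mapPoly] at h6'
      linarith [hR.2]

/-- The contribution of the branch `i` to the eigenfunction on the piece `j`. -/
noncomputable def branchFun (i j : Fin 3) (x : ℝ) : ℝ :=
  ZPoly.eval (branchPoly i j) (10 ^ 5 * x - center j)

/-- The eigenfunction on the piece `j`. -/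
noncomputable def pieceFun (j : Fin 3) (x : ℝ) : ℝ :=
  ZPoly.eval (eigenPoly j) (10 ^ 5 * x - center j)

/-- An approximate eigenfunction of the transfer operator. -/
noncomputable def eigenFun (x : ℝ) : ℝ :=
  if -0.2 ≤ x then pieceFun 0 x else if -0.6 ≤ x then pieceFun 1 x else pieceFun 2 x

lemma eigenFun_eq {j : Fin 3} {x : ℝ} (hx : x ∈ piece j) : eigenFun x = pieceFun j x := by
  unfold eigenFun
  match j with
  | 0 =>
    rw [mem_piece_zero] at hx
    rw [if_pos (by linarith)]
  | 1 =>
    rw [mem_piece_one] at hx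
    rw [if_neg (by linarith), if_pos (by linarith)]
  | 2 =>
    rw [mem_piece_two] at hx
    rw [if_neg (by linarith), if_neg (by linarith)]

lemma pieceFun_eq_sum (j : Fin 3) (x : ℝ) : pieceFun j x = ∑ i, branchFun i j x := by
  simp only [pieceFun, eigenPoly, ZPoly.eval_add, branchFun, Fin.sum_univ_three]

lemma eigenPoly_bounds (j : Fin 3) : 1 ≤ ZPoly.lower (eigenPoly j) (radius j) ∧
    ZPoly.upper (eigenPoly j) (radius j) ≤ 10 ^ 100 := by
  revert j
  decide +kernel

lemma eigenFun_bounds {j : Fin 3} {x : ℝ} (hx : x ∈ piece j) :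
    1 ≤ eigenFun x ∧ eigenFun x ≤ 10 ^ 100 := by
  obtain ⟨h1, h2⟩ := eigenPoly_bounds j
  rw [eigenFun_eq hx]
  constructor
  · exact le_trans (by exact_mod_cast h1) (ZPoly.lower_le_eval _ hx)
  · exact (le_abs_self _).trans ((ZPoly.abs_eval_le _ hx).trans (by exact_mod_cast h2))

lemma length_branchPoly (i j : Fin 3) : (branchPoly i j).length = 16 := by
  revert i j
  decide +kernel

lemma abs_log_branchFun_le {i j : Fin 3} {y : ℝ} (hy : y ∈ piece i) (hRy : RV y ∈ piece j) :
    0 < branchFun i j (RV y) ∧ |Real.log (branchFun i j (RV y)) +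
      0.491954570052666344 * Real.log |chord y y| - Real.log (pieceFun i y)| ≤ 12 / 10 ^ 16 := by
  have h := abs_log_ratio_le_of_ratioCheck (branchCheck_eq_true i j) (by decide) (by decide)
    (by norm_num) (by norm_num) (by norm_num) (abs_sub_subcenter_le hy hRy)
  have eA : ZPoly.eval (ZPoly.comp (ZPoly.dilate (10 ^ 10) (branchPoly i j))
      (mapPoly (subcenter i j) (center j))) (10 ^ 5 * y - subcenter i j) =
      10 ^ 160 * branchFun i j (RV y) := by
    rw [ZPoly.eval_comp, eval_mapPoly, ZPoly.eval_dilate (by norm_num), length_branchPoly,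
      Int.cast_pow, Int.cast_ofNat, mul_div_cancel_left₀ _ (by norm_num), ← pow_mul]
    rfl
  have eQ : ZPoly.eval (ZPoly.smul (orientation i) (ratePoly (subcenter i j)))
      (10 ^ 5 * y - subcenter i j) = 10 ^ 10 * |chord y y| := by
    rw [ZPoly.eval_smul, eval_ratePoly, abs_chord_eq hy hy]
    ring
  have eB : ZPoly.eval (ZPoly.comp (eigenPoly i) [subcenter i j - center i, 1])
      (10 ^ 5 * y - subcenter i j) = pieceFun i y := by
    rw [ZPoly.eval_comp, pieceFun]
    congr 1
    simp only [ZPoly.eval]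
    push_cast
    ring
  rw [eA, eQ, eB] at h
  obtain ⟨hA, -, -, h⟩ := h
  push_cast at h
  rw [mul_div_cancel_left₀ _ (by positivity), mul_div_cancel_left₀ _ (by positivity)] at h
  refine ⟨pos_of_mul_pos_right hA (by positivity), ?_⟩
  convert h using 1
  · norm_num [exponent]
  · norm_num

lemma one_le_log_abs_chord {i : Fin 3} {y : ℝ} (hy : y ∈ piece i) :
    1 ≤ Real.log |chord y y| := by
  have h4 := four_le_abs_chord hy hy
  rw [Real.le_log_iff_exp_le (by linarith)]
  linarith [Real.exp_one_lt_d9]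

lemma log_rpow_mul_pieceFun {i : Fin 3} {y : ℝ} (hy : y ∈ piece i) (s : ℝ) :
    0 < |chord y y| ^ (-s) * pieceFun i y ∧
      Real.log (|chord y y| ^ (-s) * pieceFun i y) =
        -s * Real.log |chord y y| + Real.log (pieceFun i y) := by
  have h4 := four_le_abs_chord hy hy
  have h0 : 0 < |chord y y| := by linarith
  have hE := (eigenFun_bounds hy).1
  rw [eigenFun_eq hy] at hE
  have hr := Real.rpow_pos_of_pos h0 (-s)
  refine ⟨by positivity, ?_⟩
  rw [Real.log_mul hr.ne' (by linarith), Real.log_rpow h0]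

lemma rpow_mul_pieceFun_le {i j : Fin 3} {y : ℝ} (hy : y ∈ piece i) (hRy : RV y ∈ piece j) :
    |chord y y| ^ (-0.49195457005267 : ℝ) * pieceFun i y ≤ branchFun i j (RV y) := by
  obtain ⟨hpos, hlog⟩ := log_rpow_mul_pieceFun hy 0.49195457005267
  obtain ⟨hb, h⟩ := abs_log_branchFun_le hy hRy
  rw [← Real.log_le_log_iff hpos hb, hlog]
  linarith [(abs_le.1 h).1, one_le_log_abs_chord hy]

lemma branchFun_le_rpow_mul {i j : Fin 3} {y : ℝ} (hy : y ∈ piece i) (hRy : RV y ∈ piece j) :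
    branchFun i j (RV y) ≤ |chord y y| ^ (-0.49195457005266 : ℝ) * pieceFun i y := by
  obtain ⟨hpos, hlog⟩ := log_rpow_mul_pieceFun hy 0.49195457005266
  obtain ⟨hb, h⟩ := abs_log_branchFun_le hy hRy
  rw [← Real.log_le_log_iff hb hpos, hlog]
  linarith [(abs_le.1 h).2, one_le_log_abs_chord hy]

lemma transfer_eigenFun_le {j : Fin 3} {x : ℝ} (hx : x ∈ piece j) :
    transfer branch (fun y => |chord y y|) 0.49195457005267 eigenFun x ≤ eigenFun x := by
  have hx' := piece_subset j hx
  rw [eigenFun_eq hx, pieceFun_eq_sum, transfer]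
  refine Finset.sum_le_sum fun i _ => ?_
  have hi := branch_mem i hx'
  have h := rpow_mul_pieceFun_le hi ((RV_branch i hx').symm ▸ hx)
  rwa [RV_branch i hx', ← eigenFun_eq hi] at h

lemma le_transfer_eigenFun {j : Fin 3} {x : ℝ} (hx : x ∈ piece j) :
    eigenFun x ≤ transfer branch (fun y => |chord y y|) 0.49195457005266 eigenFun x := by
  have hx' := piece_subset j hx
  rw [eigenFun_eq hx, pieceFun_eq_sum, transfer]
  refine Finset.sum_le_sum fun i _ => ?_
  have hi := branch_mem i hx'
  have h := branchFun_le_rpow_mul hi ((RV_branch i hx').symm ▸ hx)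
  rwa [RV_branch i hx', ← eigenFun_eq hi] at h

end Vicsek

theorem stmt_10 (J : Set ℝ) (hsub : J ⊆ Set.Icc (-1) 0) (hne : J.Nonempty)
    (hcl : IsClosed J) (heq : J = RV ⁻¹' J ∩ Set.Icc (-1) 0)
    (hmin : ∀ J' : Set ℝ, J' ⊆ Set.Icc (-1) 0 → J'.Nonempty → IsClosed J' →
      J' = RV ⁻¹' J' ∩ Set.Icc (-1) 0 → J ⊆ J') :
    ENNReal.ofReal 0.49195457005266 ≤ dimH J ∧
      dimH J ≤ ENNReal.ofReal 0.49195457005267 := by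
  have hJ : IsCompact J := isCompact_Icc.of_isClosed_subset hcl hsub
  have hsys := Vicsek.conformalSystem hsub heq
  have hmem : ∀ x ∈ J, ∃ i, x ∈ Vicsek.piece i := fun x hx =>
    Vicsek.exists_mem_piece (hsub hx) (hsub (heq.subset hx).1)
  have hlow : ∀ x ∈ J, 1 ≤ Vicsek.eigenFun x := fun x hx =>
    (Vicsek.eigenFun_bounds (hmem x hx).choose_spec).1
  constructor
  · exact hsys.le_dimH hne hJ (by norm_num) one_pos hlow
      (fun x hx => (Vicsek.eigenFun_bounds (hmem x hx).choose_spec).2)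
      fun x hx => Vicsek.le_transfer_eigenFun (hmem x hx).choose_spec
  · exact hsys.dimH_le hne (by norm_num) one_pos hlow
      (fun x hx => Vicsek.transfer_eigenFun_le (hmem x hx).choose_spec) hJ.isBounded
end
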